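/- For every ε > 0 there exists N_0 such that for every integer N ≥ N_0 there is a finite set M of positive integers with |M| = N and max M ≤ 2 · min M satisfying (1/N) ∑_{m ∈ M} ∑_{n ∈ M} √( gcd(m,n)/lcm(m,n) ) ≥ exp( (2√2 − ε) · √( (log N · log_3 N)/log_2 N ) ). -/

import Mathlib

open scoped Classical
open MeasureTheory Finset

/-- The zeta sum `∑_{1 ≤ n ≤ x} n^{it}`. -/
noncomputable def zetaSum (x t : ℝ) : ℂ :=
  ∑ n ∈ Finset.Icc 1 ⌊x⌋₊, (n : ℂ) ^ ((t : ℂ) * Complex.I)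

/-- `Ψ(x,y)`: the number of `y`-friable positive integers `n ≤ x`. -/
noncomputable def Psi (x y : ℝ) : ℕ :=
  ((Finset.Icc 1 ⌊x⌋₊).filter fun n => ∀ p : ℕ, p ∈ n.primeFactors → (p : ℝ) ≤ y).card

/-- `Ψ(x,y;t) = ∑_{n ≤ x, n y-friable} n^{it}`. -/
noncomputable def PsiT (x y t : ℝ) : ℂ :=
  ∑ n ∈ (Finset.Icc 1 ⌊x⌋₊).filter fun n => ∀ p : ℕ, p ∈ n.primeFactors → (p : ℝ) ≤ y,
    (n : ℂ) ^ ((t : ℂ) * Complex.I)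

/-!
The set `M` is extracted from the divisors of `∏_{p ∈ P} p²`, for the primes `p` with
`(log log L)² < log (p / L) ≤ δ log L` and `L = log N`. Give a divisor `n` the weight
`∏_{v_p(n) ≠ 1} f(p)`, with `f(p)` proportional to `1 / (√p log (p / L))`. The GCD form of these
weights factors over `P` as a product of local forms
`1 + 2 f(p)² + 4 f(p) / √p + 2 f(p)² / p ≈ (1 + 2 f(p)²) exp (4 f(p) / √p)`, so relative to the
`ℓ²` mass `∏ (1 + 2 f(p)²)` it is at least `exp ((1 - δ) 4 ∑ f(p) / √p)`.

Rankin's trick shows that the divisors of tiny weight contribute negligibly as soon as the entropy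
`4 ∑ f(p)² log (1 / f(p))` is slightly below `log N`. The remaining divisors are split according to
the dyadic size of the weight and of the divisor, so that one class `A`, of at most `N` elements
within a factor `2` of each other, carries all but a power of `log N` of the form. Dilating `A` by
many nearly equal integers coprime to it fills it up to exactly `N` elements without losing more
than a constant factor. Maximising `∑ f(p) / √p` under the entropy constraint by means of Mertens'
theorem produces the exponent `2√2 √(log N log₃ N / log₂ N)`.
-/

open Filter Real

/-- The primes `p` with `x < p ≤ y`. -/
noncomputable def primesBetween (x y : ℝ) : Finset ℕ :=
  {p ∈ Ioc ⌊x⌋₊ ⌊y⌋₊ | p.Prime}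

section Mertens

variable {n p : ℕ}

lemma mem_primesBetween {x y : ℝ} :
    p ∈ primesBetween x y ↔ p.Prime ∧ x < p ∧ (p : ℝ) ≤ y := by
  simp only [primesBetween, mem_filter, mem_Ioc]
  constructor
  · rintro ⟨⟨hx, hy⟩, hp⟩
    exact ⟨hp, (Nat.floor_lt' hp.ne_zero).1 hx, (Nat.le_floor_iff' hp.ne_zero).1 hy⟩
  · rintro ⟨hp, hx, hy⟩
    exact ⟨⟨(Nat.floor_lt' hp.ne_zero).2 hx, (Nat.le_floor_iff' hp.ne_zero).2 hy⟩, hp⟩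

lemma sum_primesBetween_eq_sub {x y : ℝ} (hxy : x ≤ y) (g : ℕ → ℝ) :
    ∑ p ∈ primesBetween x y, g p =
      ∑ p ∈ (⌊y⌋₊).primesLE, g p - ∑ p ∈ (⌊x⌋₊).primesLE, g p := by
  have hfloor : ⌊x⌋₊ ≤ ⌊y⌋₊ := Nat.floor_le_floor hxy
  have hsdiff : primesBetween x y = (⌊y⌋₊).primesLE \ (⌊x⌋₊).primesLE := by
    ext p
    simp only [primesBetween, mem_filter, mem_Ioc, Finset.mem_sdiff, Nat.mem_primesLE]
    grind
  rw [hsdiff, sum_sdiff_eq_sub (Nat.primesLE_mono hfloor)]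

lemma log_factorial_eq_sum_primesLE (n : ℕ) :
    log n.factorial = ∑ p ∈ n.primesLE, (n.factorial.factorization p : ℝ) * log p := by
  have hsupp : n.factorial.factorization.support ⊆ n.primesLE := by
    intro p hp
    have h := Nat.mem_primeFactors.1 (Nat.support_factorization _ ▸ hp)
    exact Nat.mem_primesLE.2 ⟨h.1.dvd_factorial.1 h.2.1, h.1⟩
  conv_lhs => rw [← Nat.prod_factorization_pow_eq_self n.factorial_ne_zero,
    Finsupp.prod_of_support_subset _ hsupp _ (by simp), Nat.cast_prod]
  rw [log_prod fun p hp => by simp [(Nat.prime_of_mem_primesLE hp).ne_zero]]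
  simp

lemma div_sub_one_le_factorization_factorial (hp : p.Prime) (hpn : p ≤ n) :
    (n : ℝ) / p - 1 ≤ n.factorial.factorization p := by
  have hdiv : n / p ≤ n.factorial.factorization p := by
    rw [Nat.factorization_factorial hp (Nat.lt_succ_self _)]
    simpa using single_le_sum (f := fun i => n / p ^ i) (fun _ _ => Nat.zero_le _)
      (mem_Ico.2 ⟨le_rfl, Nat.succ_lt_succ (Nat.log_pos hp.one_lt hpn)⟩)
  have hfloor := Nat.lt_floor_add_one ((n : ℝ) / p)
  rw [Nat.floor_div_eq_div] at hfloor
  exact (sub_lt_iff_lt_add.2 hfloor).le.trans (by exact_mod_cast hdiv)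

lemma factorization_factorial_le_div_sub_one (hp : p.Prime) :
    (n.factorial.factorization p : ℝ) ≤ n / ((p : ℝ) - 1) := by
  have := Fact.mk hp
  have hlegendre : (p - 1) * n.factorial.factorization p ≤ n := by
    rw [Nat.factorization_def _ hp, sub_one_mul_padicValNat_factorial]
    exact Nat.sub_le _ _
  have hp1 : (1 : ℝ) < p := by exact_mod_cast hp.one_lt
  rw [le_div_iff₀' (by linarith), ← Nat.cast_pred hp.pos]
  exact_mod_cast hlegendre

lemma sum_log_div_primesLE_le (hn : n ≠ 0) :
    ∑ p ∈ n.primesLE, log p / p ≤ log n + log 4 := by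
  have hn0 : (0 : ℝ) < n := by positivity
  have hfact : log n.factorial ≤ n * log n := by
    rw [← log_pow]
    exact log_le_log (by positivity) (by exact_mod_cast n.factorial_le_pow)
  have hlegendre : ∑ p ∈ n.primesLE, ((n : ℝ) / p - 1) * log p ≤ log n.factorial := by
    rw [log_factorial_eq_sum_primesLE]
    refine sum_le_sum fun p hp => ?_
    have hp := Nat.mem_primesLE.1 hp
    exact mul_le_mul_of_nonneg_right (div_sub_one_le_factorization_factorial hp.2 hp.1)
      (log_natCast_nonneg p)
  have hsplit : ∑ p ∈ n.primesLE, ((n : ℝ) / p - 1) * log p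
      = n * ∑ p ∈ n.primesLE, log p / p - ∑ p ∈ n.primesLE, log p := by
    rw [mul_sum, ← sum_sub_distrib]
    exact sum_congr rfl fun p _ => by ring
  have hcheb : ∑ p ∈ n.primesLE, log p ≤ log 4 * n := by
    rw [← Chebyshev.theta_eq_sum_primesLE_log]
    exact Chebyshev.theta_le_log4_mul_x hn0.le
  refine le_of_mul_le_mul_left ?_ hn0
  linarith

lemma log_div_sub_one_le {x : ℝ} (hx : 2 ≤ x) :
    log x / (x - 1) ≤ log x / x + 4 * (1 / x ^ (3 / 2 : ℝ)) := by
  have hlog : log x ≤ 2 * x ^ (1 / 2 : ℝ) := by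
    have := log_le_rpow_div (x := x) (ε := 1 / 2) (by linarith) (by norm_num)
    linarith
  have hpow : x ^ (1 / 2 : ℝ) * x ^ (3 / 2 : ℝ) = x * x := by
    rw [← rpow_add (by linarith), ← sq, ← rpow_natCast]
    norm_num
  have hdiff : log x / (x - 1) - log x / x = log x / (x * (x - 1)) := by
    have : x - 1 ≠ 0 := by linarith
    field_simp
    ring
  have hbound : log x / (x * (x - 1)) ≤ 4 * (1 / x ^ (3 / 2 : ℝ)) := by
    rw [mul_one_div, div_le_div_iff₀ (by nlinarith) (by positivity)]
    calc log x * x ^ (3 / 2 : ℝ) ≤ 2 * x ^ (1 / 2 : ℝ) * x ^ (3 / 2 : ℝ) := by gcongr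
      _ = 2 * (x * x) := by rw [mul_assoc, hpow]
      _ ≤ 4 * (x * (x - 1)) := by nlinarith
  linarith

lemma exists_log_sub_le_sum_log_div_primesLE :
    ∃ C : ℝ, ∀ n : ℕ, n ≠ 0 → log n - C ≤ ∑ p ∈ n.primesLE, log p / p := by
  have hsummable : Summable fun k : ℕ => 4 * (1 / (k : ℝ) ^ (3 / 2 : ℝ)) :=
    (summable_one_div_nat_rpow.2 (by norm_num)).mul_left 4
  refine ⟨1 + ∑' k : ℕ, 4 * (1 / (k : ℝ) ^ (3 / 2 : ℝ)), fun n hn => ?_⟩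
  have hn0 : (0 : ℝ) < n := by positivity
  have hstirling : n * log n - n ≤ log n.factorial := by
    have := Stirling.le_log_factorial_stirling hn
    have : 0 ≤ log (2 * π) := log_nonneg (by linarith [pi_gt_three])
    linarith [log_natCast_nonneg n]
  have hlegendre : log n.factorial ≤ n * ∑ p ∈ n.primesLE, log p / ((p : ℝ) - 1) := by
    rw [log_factorial_eq_sum_primesLE, mul_sum]
    refine sum_le_sum fun p hp => ?_
    rw [mul_div_assoc', mul_div_right_comm]
    exact mul_le_mul_of_nonneg_right
      (factorization_factorial_le_div_sub_one (Nat.prime_of_mem_primesLE hp)) (log_natCast_nonneg p)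
  have hcompare : ∑ p ∈ n.primesLE, log p / ((p : ℝ) - 1) ≤
      ∑ p ∈ n.primesLE, log p / p + ∑' k : ℕ, 4 * (1 / (k : ℝ) ^ (3 / 2 : ℝ)) :=
    calc ∑ p ∈ n.primesLE, log p / ((p : ℝ) - 1)
        ≤ ∑ p ∈ n.primesLE, (log p / p + 4 * (1 / (p : ℝ) ^ (3 / 2 : ℝ))) :=
          sum_le_sum fun p hp =>
            log_div_sub_one_le (by exact_mod_cast Nat.two_le_of_mem_primesLE hp)
      _ ≤ _ := by
          rw [sum_add_distrib]
          gcongr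
          exact hsummable.sum_le_tsum _ fun _ _ => by positivity
  have hdiff : log n - 1 ≤ ∑ p ∈ n.primesLE, log p / ((p : ℝ) - 1) :=
    le_of_mul_le_mul_left (by linarith) hn0
  linarith

lemma exists_log_sub_log_sub_le_sum_primesBetween :
    ∃ C : ℝ, 0 < C ∧ ∀ x y : ℝ, 1 ≤ x → x ≤ y →
      log y - log x - C ≤ ∑ p ∈ primesBetween x y, log p / p := by
  obtain ⟨C, hC⟩ := exists_log_sub_le_sum_log_div_primesLE
  refine ⟨|C| + log 2 + log 4, by positivity, fun x y hx hxy => ?_⟩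
  have hfx : 1 ≤ ⌊x⌋₊ := Nat.one_le_floor_iff x |>.2 hx
  have hfy : 1 ≤ ⌊y⌋₊ := hfx.trans (Nat.floor_le_floor hxy)
  have hlower := hC ⌊y⌋₊ (by omega)
  have hupper := sum_log_div_primesLE_le (n := ⌊x⌋₊) (by omega)
  have hlogx : log ⌊x⌋₊ ≤ log x :=
    log_le_log (by exact_mod_cast hfx) (Nat.floor_le (by linarith))
  have hlogy : log y - log 2 ≤ log ⌊y⌋₊ := by
    rw [← log_div (by linarith) (by norm_num)]
    refine log_le_log (by linarith) ?_
    have := Nat.lt_floor_add_one y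
    have : (1 : ℝ) ≤ ⌊y⌋₊ := by exact_mod_cast hfy
    linarith
  rw [sum_primesBetween_eq_sub hxy]
  linarith [le_abs_self C]

end Mertens

/-- The kernel `√(gcd(m,n)/lcm(m,n))` of the GCD sum. -/
noncomputable def gcdKernel (m n : ℕ) : ℝ :=
  √((m.gcd n : ℝ) / (m.lcm n : ℝ))

/-- The bilinear form `∑_{m,n ∈ T} c(m) d(n) √(gcd(m,n)/lcm(m,n))`; the GCD sum of `T` is
`gcdForm T 1 1`. -/
noncomputable def gcdForm (T : Finset ℕ) (c d : ℕ → ℝ) : ℝ :=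
  ∑ m ∈ T, ∑ n ∈ T, c m * d n * gcdKernel m n

section GcdForm

variable {T A : Finset ℕ} {c d : ℕ → ℝ}

lemma gcdKernel_nonneg (m n : ℕ) : 0 ≤ gcdKernel m n := sqrt_nonneg _

lemma gcdKernel_comm (m n : ℕ) : gcdKernel m n = gcdKernel n m := by
  rw [gcdKernel, gcdKernel, Nat.gcd_comm, Nat.lcm_comm]

lemma gcdKernel_self {m : ℕ} (hm : m ≠ 0) : gcdKernel m m = 1 := by
  simp [gcdKernel, hm]

lemma gcdKernel_eq_div (m n : ℕ) : gcdKernel m n = (m.gcd n : ℝ) / (√m * √n) := by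
  rcases (m.gcd n).eq_zero_or_pos with hgcd | hgcd
  · simp [gcdKernel, hgcd]
  have hg : (0 : ℝ) < m.gcd n := by exact_mod_cast hgcd
  have hlcm : (m.lcm n : ℝ) = m * n / m.gcd n := by
    rw [eq_div_iff hg.ne', mul_comm]
    exact_mod_cast Nat.gcd_mul_lcm m n
  rw [gcdKernel, hlcm, div_div_eq_mul_div, ← sq, sqrt_div (sq_nonneg _), sqrt_sq hg.le,
    sqrt_mul m.cast_nonneg]

lemma gcdKernel_mul_left {t : ℕ} (ht : t ≠ 0) (m n : ℕ) :
    gcdKernel (t * m) (t * n) = gcdKernel m n := by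
  rw [gcdKernel, gcdKernel, Nat.gcd_mul_left, Nat.lcm_mul_left, Nat.cast_mul, Nat.cast_mul,
    mul_div_mul_left _ _ (Nat.cast_ne_zero.2 ht)]

lemma gcdKernel_mul_mul_of_coprime {x y X Y : ℕ} (h : (x * y).Coprime (X * Y)) :
    gcdKernel (x * X) (y * Y) = gcdKernel x y * gcdKernel X Y := by
  obtain ⟨hx, hy⟩ := Nat.coprime_mul_iff_left.1 h
  have hgcd : (x * X).gcd (y * Y) = x.gcd y * X.gcd Y := by
    rw [(Nat.coprime_mul_iff_right.1 hy).2.gcd_mul,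
      (Nat.coprime_mul_iff_right.1 hy).1.symm.gcd_mul_right_cancel,
      (Nat.coprime_mul_iff_right.1 hx).2.gcd_mul_left_cancel]
  simp only [gcdKernel_eq_div, hgcd, Nat.cast_mul, sqrt_mul (Nat.cast_nonneg _)]
  rw [div_mul_div_comm, mul_mul_mul_comm]

lemma gcd_eq_sum_totient {m n : ℕ} {D : Finset ℕ} (hm : m ≠ 0) (hD : m.divisors ⊆ D) :
    (m.gcd n : ℝ) =
      ∑ e ∈ D, (e.totient : ℝ) * ((if e ∣ m then 1 else 0) * (if e ∣ n then 1 else 0)) := by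
  have hdivisors : (m.gcd n).divisors = {e ∈ D | e ∣ m ∧ e ∣ n} := by
    ext e
    simp only [Nat.mem_divisors, Nat.dvd_gcd_iff, mem_filter]
    exact ⟨fun h => ⟨hD (Nat.mem_divisors.2 ⟨h.1.1, hm⟩), h.1⟩,
      fun h => ⟨h.2, Nat.gcd_ne_zero_left hm⟩⟩
  conv_lhs => rw [← Nat.sum_totient (m.gcd n), hdivisors, sum_filter]
  push_cast
  exact sum_congr rfl fun e _ => by split_ifs <;> simp_all

lemma gcdForm_nonneg (hc : ∀ m ∈ T, 0 ≤ c m) (hd : ∀ m ∈ T, 0 ≤ d m) : 0 ≤ gcdForm T c d :=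
  sum_nonneg fun m hm => sum_nonneg fun n hn =>
    mul_nonneg (mul_nonneg (hc m hm) (hd n hn)) (gcdKernel_nonneg m n)

lemma gcdForm_one_nonneg (T : Finset ℕ) : 0 ≤ gcdForm T 1 1 :=
  gcdForm_nonneg (fun _ _ => zero_le_one) fun _ _ => zero_le_one

lemma gcdForm_mono_set {S : Finset ℕ} (hST : S ⊆ T) (hc : ∀ m ∈ T, 0 ≤ c m)
    (hd : ∀ m ∈ T, 0 ≤ d m) : gcdForm S c d ≤ gcdForm T c d := by
  have hterm : ∀ m ∈ T, ∀ n ∈ T, 0 ≤ c m * d n * gcdKernel m n := fun m hm n hn =>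
    mul_nonneg (mul_nonneg (hc m hm) (hd n hn)) (gcdKernel_nonneg m n)
  calc gcdForm S c d ≤ ∑ m ∈ S, ∑ n ∈ T, c m * d n * gcdKernel m n :=
        sum_le_sum fun m hm => sum_le_sum_of_subset_of_nonneg hST
          fun n hn _ => hterm m (hST hm) n hn
    _ ≤ gcdForm T c d := sum_le_sum_of_subset_of_nonneg hST
          fun m hm _ => sum_nonneg (hterm m hm)

lemma gcdForm_self_eq_sum_sq (c : ℕ → ℝ) {D : Finset ℕ}
    (hD : ∀ m ∈ T, m.divisors ⊆ D) :
    gcdForm T c c = ∑ e ∈ D, (e.totient : ℝ) *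
      (∑ m ∈ T, (if e ∣ m then 1 else 0) * (c m / √m)) ^ 2 := by
  have hterm : ∀ m ∈ T, ∀ n, c m * c n * gcdKernel m n = ∑ e ∈ D, (e.totient : ℝ) *
      (((if e ∣ m then 1 else 0) * (c m / √m)) * ((if e ∣ n then 1 else 0) * (c n / √n))) := by
    intro m hm n
    rcases eq_or_ne m 0 with rfl | hm0
    · simp [gcdKernel_eq_div]
    rw [gcdKernel_eq_div, gcd_eq_sum_totient hm0 (hD m hm), sum_div, mul_sum]
    exact sum_congr rfl fun e _ => by ring
  simp_rw [gcdForm, sq, sum_mul_sum, mul_sum]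
  rw [sum_congr rfl fun m hm => sum_congr rfl fun n _ => hterm m hm n,
    sum_congr rfl fun m _ => sum_comm, sum_comm]

-- Cauchy–Schwarz, applied to each square of the positive semidefinite form.
lemma gcdForm_self_le_card_image_mul_sum_fiber {β : Type*} [DecidableEq β] (T : Finset ℕ)
    (c : ℕ → ℝ) (κ : ℕ → β) :
    gcdForm T c c ≤ #(T.image κ) * ∑ k ∈ T.image κ, gcdForm {m ∈ T | κ m = k} c c := by
  set D := T.biUnion Nat.divisors
  have hD : ∀ m ∈ T, m.divisors ⊆ D := fun m hm => subset_biUnion_of_mem Nat.divisors hm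
  have hfiber : ∀ k ∈ T.image κ, _ := fun k _ =>
    gcdForm_self_eq_sum_sq (T := {m ∈ T | κ m = k}) c fun m hm => hD m (mem_filter.1 hm).1
  rw [gcdForm_self_eq_sum_sq c hD, sum_congr rfl hfiber, sum_comm, mul_sum]
  refine sum_le_sum fun e _ => ?_
  rw [← mul_sum, mul_left_comm,
    ← sum_fiberwise_of_maps_to (fun m hm => mem_image_of_mem κ hm)
      fun m => (if e ∣ m then 1 else 0) * (c m / √m)]
  exact mul_le_mul_of_nonneg_left sq_sum_le_card_mul_sum_sq (Nat.cast_nonneg _)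

lemma exists_fiber_gcdForm_self_ge {β : Type*} [DecidableEq β] (hT : T.Nonempty) (c : ℕ → ℝ)
    (κ : ℕ → β) :
    ∃ k ∈ T.image κ, gcdForm T c c * ∑ m ∈ T with κ m = k, c m ^ 2 ≤
      #(T.image κ) * (∑ m ∈ T, c m ^ 2) * gcdForm {m ∈ T | κ m = k} c c := by
  refine exists_le_of_sum_le (hT.image κ) ?_
  rw [← mul_sum, ← mul_sum, sum_fiberwise_of_maps_to fun m hm => mem_image_of_mem κ hm]
  have := mul_le_mul_of_nonneg_right (gcdForm_self_le_card_image_mul_sum_fiber T c κ)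
    (sum_nonneg fun m _ => sq_nonneg (c m) : 0 ≤ ∑ m ∈ T, c m ^ 2)
  linarith

lemma gcdForm_self_mul_card_le {r : ℝ} (hc : ∀ a ∈ A, 0 ≤ c a)
    (hr : ∀ a ∈ A, ∀ b ∈ A, c a ≤ r * c b) :
    gcdForm A c c * #A ≤ r ^ 2 * (∑ a ∈ A, c a ^ 2) * gcdForm A 1 1 := by
  have hz : ∀ z ∈ A, gcdForm A c c ≤ r ^ 2 * c z ^ 2 * gcdForm A 1 1 := by
    intro z hz
    simp only [gcdForm, mul_sum]
    refine sum_le_sum fun a ha => sum_le_sum fun b hb => ?_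
    have hprod : c a * c b ≤ (r * c z) * (r * c z) :=
      mul_le_mul (hr a ha z hz) (hr b hb z hz) (hc b hb) ((hc a ha).trans (hr a ha z hz))
    calc c a * c b * gcdKernel a b ≤ (r * c z) * (r * c z) * gcdKernel a b :=
          mul_le_mul_of_nonneg_right hprod (gcdKernel_nonneg a b)
      _ = _ := by simp only [Pi.one_apply]; ring
  calc gcdForm A c c * #A = ∑ _z ∈ A, gcdForm A c c := by rw [sum_const, nsmul_eq_mul, mul_comm]
    _ ≤ ∑ z ∈ A, r ^ 2 * c z ^ 2 * gcdForm A 1 1 := sum_le_sum hz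
    _ = _ := by rw [← sum_mul, ← mul_sum]

lemma exists_subset_gcdForm_one_ge {β : Type*} [DecidableEq β] {r : ℝ} (hT : T.Nonempty)
    (hc : ∀ m ∈ T, 0 < c m) (κ : ℕ → β)
    (hκ : ∀ a ∈ T, ∀ b ∈ T, κ a = κ b → c a ≤ r * c b) :
    ∃ A ⊆ T, A.Nonempty ∧ (∀ a ∈ A, ∀ b ∈ A, κ a = κ b) ∧
      gcdForm T c c * #A ≤ r ^ 2 * #(T.image κ) * (∑ m ∈ T, c m ^ 2) * gcdForm A 1 1 := by
  obtain ⟨k, hk, hle⟩ := exists_fiber_gcdForm_self_ge hT c κ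
  set A : Finset ℕ := {m ∈ T | κ m = k}
  have hAT : ∀ a ∈ A, a ∈ T := fun a ha => (mem_filter.1 ha).1
  have hAκ : ∀ a ∈ A, ∀ b ∈ A, κ a = κ b := fun a ha b hb =>
    (mem_filter.1 ha).2.trans (mem_filter.1 hb).2.symm
  have hA : A.Nonempty := by
    obtain ⟨a, ha, hak⟩ := mem_image.1 hk
    exact ⟨a, mem_filter.2 ⟨ha, hak⟩⟩
  refine ⟨A, filter_subset _ _, hA, hAκ, ?_⟩
  have hflat := gcdForm_self_mul_card_le (fun a ha => (hc a (hAT a ha)).le)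
    fun a ha b hb => hκ a (hAT a ha) b (hAT b hb) (hAκ a ha b hb)
  have hA2 : 0 < ∑ a ∈ A, c a ^ 2 := sum_pos (fun a ha => pow_pos (hc a (hAT a ha)) 2) hA
  have hT2 : 0 ≤ ∑ m ∈ T, c m ^ 2 := sum_nonneg fun m _ => sq_nonneg (c m)
  refine le_of_mul_le_mul_right ?_ hA2
  calc gcdForm T c c * #A * ∑ a ∈ A, c a ^ 2
      = (gcdForm T c c * ∑ a ∈ A, c a ^ 2) * #A := by ring
    _ ≤ (#(T.image κ) * (∑ m ∈ T, c m ^ 2) * gcdForm A c c) * #A := by gcongr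
    _ = #(T.image κ) * (∑ m ∈ T, c m ^ 2) * (gcdForm A c c * #A) := by ring
    _ ≤ #(T.image κ) * (∑ m ∈ T, c m ^ 2) *
          (r ^ 2 * (∑ a ∈ A, c a ^ 2) * gcdForm A 1 1) := by gcongr
    _ = _ := by ring

end GcdForm

/-- `M` is a set of `N` positive integers with `max M ≤ 2 min M`. -/
structure IsDyadicOfCard (M : Finset ℕ) (N : ℕ) : Prop where
  pos : ∀ m ∈ M, 0 < m
  card_eq : #M = N
  le_two_mul : ∀ m ∈ M, ∀ n ∈ M, m ≤ 2 * n

/-- The `i`-th of a sequence of multipliers that are coprime to every element of `A`; for `i ≤ K`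
their ratios are close to `1` when `K` is large. -/
def coprimeDilator (A : Finset ℕ) (K i : ℕ) : ℕ :=
  1 + (∏ a ∈ A, a) * ((∏ a ∈ A, a) * K + i)

/-- The union of the dilates `coprimeDilator A K i • A` over `i < q`. -/
def coprimeDilates (A : Finset ℕ) (K q : ℕ) : Finset ℕ :=
  (range q ×ˢ A).image fun x => coprimeDilator A K x.1 * x.2

section Dilates

variable {A : Finset ℕ} {K q i j : ℕ}

lemma coprimeDilator_pos (A : Finset ℕ) (K i : ℕ) : 0 < coprimeDilator A K i := by
  rw [coprimeDilator]
  omega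

lemma coprimeDilator_coprime {a : ℕ} (ha : a ∈ A) : (coprimeDilator A K i).Coprime a := by
  have : (coprimeDilator A K i).Coprime (∏ a ∈ A, a) := by simp [coprimeDilator]
  exact this.coprime_dvd_right (dvd_prod_of_mem (fun a => a) ha)

lemma coprimeDilator_injective (hA : ∀ a ∈ A, 0 < a) :
    Function.Injective (coprimeDilator A K) := fun i j hij => by
  have := Nat.eq_of_mul_eq_mul_left (prod_pos hA) (Nat.add_left_cancel hij)
  omega

lemma coprimeDilator_mul_le {a b : ℕ} (hA : ∀ a ∈ A, 0 < a) (ha : a ∈ A) (hab : a < 2 * b)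
    (hi : i ≤ K) : coprimeDilator A K i * a ≤ 2 * (coprimeDilator A K j * b) := by
  set D := ∏ a ∈ A, a with hD
  have haD : a ≤ D := Nat.le_of_dvd (prod_pos hA) (dvd_prod_of_mem (fun a => a) ha)
  have hgap : D * i * a ≤ coprimeDilator A K j :=
    calc D * i * a ≤ D * K * D := by gcongr
      _ = D * (D * K) := by ring
      _ ≤ 1 + D * (D * K + j) := by nlinarith
  calc coprimeDilator A K i * a = (1 + D * (D * K)) * a + D * i * a := by
        rw [coprimeDilator, ← hD]; ring
    _ ≤ coprimeDilator A K j * a + coprimeDilator A K j := by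
        gcongr
        rw [coprimeDilator, ← hD]
        gcongr
        omega
    _ = coprimeDilator A K j * (a + 1) := by ring
    _ ≤ coprimeDilator A K j * (2 * b) := by gcongr; omega
    _ = _ := by ring

lemma coprimeDilator_mul_injOn (hA : ∀ a ∈ A, 0 < a) :
    Set.InjOn (fun x : ℕ × ℕ => coprimeDilator A K x.1 * x.2) (range q ×ˢ A : Finset _) := by
  rintro ⟨i, a⟩ ha ⟨j, b⟩ hb (hab : coprimeDilator A K i * a = coprimeDilator A K j * b)
  have ha : a ∈ A := (mem_product.1 ha).2
  have hb : b ∈ A := (mem_product.1 hb).2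
  obtain rfl : i = j := coprimeDilator_injective hA <| Nat.dvd_antisymm
    ((coprimeDilator_coprime hb).dvd_of_dvd_mul_right ⟨a, hab.symm⟩)
    ((coprimeDilator_coprime ha).dvd_of_dvd_mul_right ⟨b, hab⟩)
  exact Prod.ext rfl (Nat.eq_of_mul_eq_mul_left (coprimeDilator_pos A K i) hab)

lemma card_coprimeDilates (hA : ∀ a ∈ A, 0 < a) : #(coprimeDilates A K q) = q * #A := by
  rw [coprimeDilates, card_image_of_injOn (coprimeDilator_mul_injOn hA), card_product, card_range]

lemma coprimeDilates_mono : Monotone (coprimeDilates A K) := fun _ _ h =>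
  image_subset_image (product_subset_product_left (range_mono h))

lemma isDyadicOfCard_of_subset_coprimeDilates {M : Finset ℕ} (hA : ∀ a ∈ A, 0 < a)
    (hA2 : ∀ a ∈ A, ∀ b ∈ A, a < 2 * b) (hq : q ≤ K + 1) (hM : M ⊆ coprimeDilates A K q) :
    IsDyadicOfCard M #M := by
  have hmem : ∀ m ∈ M, ∃ i ≤ K, ∃ a ∈ A, coprimeDilator A K i * a = m := by
    intro m hm
    obtain ⟨⟨i, a⟩, hia, rfl⟩ := mem_image.1 (hM hm)
    rw [mem_product, mem_range] at hia
    exact ⟨i, by omega, a, hia.2, rfl⟩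
  refine ⟨fun m hm => ?_, rfl, fun m hm n hn => ?_⟩
  · obtain ⟨i, -, a, ha, rfl⟩ := hmem m hm
    exact Nat.mul_pos (coprimeDilator_pos A K i) (hA a ha)
  · obtain ⟨i, hi, a, ha, rfl⟩ := hmem m hm
    obtain ⟨j, -, b, hb, rfl⟩ := hmem n hn
    exact coprimeDilator_mul_le hA ha (hA2 a ha b hb) hi

lemma mul_gcdForm_one_le_gcdForm_coprimeDilates (hA : ∀ a ∈ A, 0 < a) :
    q * gcdForm A 1 1 ≤ gcdForm (coprimeDilates A K q) 1 1 := by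
  have hsum : ∀ g : ℕ → ℝ, ∑ m ∈ coprimeDilates A K q, g m =
      ∑ i ∈ range q, ∑ a ∈ A, g (coprimeDilator A K i * a) := fun g => by
    rw [coprimeDilates, sum_image (coprimeDilator_mul_injOn hA), sum_product]
  simp only [gcdForm, Pi.one_apply, one_mul, hsum]
  calc q * ∑ a ∈ A, ∑ b ∈ A, gcdKernel a b
      = ∑ i ∈ range q, ∑ a ∈ A, ∑ b ∈ A,
          gcdKernel (coprimeDilator A K i * a) (coprimeDilator A K i * b) := by
        simp [gcdKernel_mul_left (coprimeDilator_pos A K _).ne']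
    _ ≤ _ := sum_le_sum fun i hi => sum_le_sum fun a _ =>
        single_le_sum (f := fun j => ∑ b ∈ A,
          gcdKernel (coprimeDilator A K i * a) (coprimeDilator A K j * b))
          (fun _ _ => sum_nonneg fun _ _ => gcdKernel_nonneg _ _) hi

lemma exists_isDyadicOfCard_gcdForm_one_ge {N : ℕ} (hA : ∀ a ∈ A, 0 < a)
    (hA2 : ∀ a ∈ A, ∀ b ∈ A, a < 2 * b) (hAne : A.Nonempty) (hN : #A ≤ N) :
    ∃ M, IsDyadicOfCard M N ∧ N * gcdForm A 1 1 ≤ 2 * #A * gcdForm M 1 1 := by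
  set q := N / #A
  have hq : 1 ≤ q := Nat.div_pos hN hAne.card_pos
  have hqN : q * #A ≤ N := Nat.div_mul_le_self N #A
  have hNq : N ≤ (q + 1) * #A := by
    rw [add_one_mul]
    exact (Nat.lt_div_mul_add hAne.card_pos).le
  obtain ⟨M, hqM, hMq, hMN⟩ := exists_subsuperset_card_eq (n := N)
    (coprimeDilates_mono (A := A) (K := N) q.le_succ)
    (by rwa [card_coprimeDilates hA]) (by rwa [card_coprimeDilates hA])
  refine ⟨M, hMN ▸ isDyadicOfCard_of_subset_coprimeDilates hA hA2
    (Nat.succ_le_succ (Nat.div_le_self _ _)) hMq, ?_⟩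
  have hN2 : (N : ℝ) ≤ 2 * #A * q := by
    have : N ≤ 2 * #A * q := by nlinarith
    exact_mod_cast this
  calc N * gcdForm A 1 1 ≤ 2 * #A * q * gcdForm A 1 1 :=
        mul_le_mul_of_nonneg_right hN2 (gcdForm_one_nonneg A)
    _ = 2 * #A * (q * gcdForm A 1 1) := by ring
    _ ≤ 2 * #A * gcdForm M 1 1 := by
        gcongr
        exact (mul_gcdForm_one_le_gcdForm_coprimeDilates hA).trans
          (gcdForm_mono_set hqM (fun _ _ => zero_le_one) fun _ _ => zero_le_one)

end Dilates

section Unweighting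

lemma le_two_mul_of_intLog_two_eq {x y : ℝ} (hy : 0 < y)
    (h : Int.log 2 x = Int.log 2 y) : x ≤ 2 * y := by
  have hx2 : x < 2 ^ (Int.log 2 y + 1) := h ▸ mod_cast Int.lt_zpow_succ_log_self one_lt_two x
  have hy2 : (2 : ℝ) ^ Int.log 2 y ≤ y := mod_cast Int.zpow_log_le_self one_lt_two hy
  rw [zpow_add_one₀ two_ne_zero] at hx2
  linarith

lemma lt_two_mul_of_natLog_two_eq {m n : ℕ} (hn : n ≠ 0) (h : Nat.log 2 m = Nat.log 2 n) :
    m < 2 * n :=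
  calc m < 2 ^ (Nat.log 2 n + 1) := h ▸ Nat.lt_pow_succ_log_self one_lt_two m
    _ = 2 * 2 ^ Nat.log 2 n := pow_succ' _ _
    _ ≤ 2 * n := by gcongr; exact Nat.pow_log_le_self 2 hn

lemma intLog_two_mem_Icc {N : ℕ} {x : ℝ} (hN : N ≠ 0) (hx : (N : ℝ)⁻¹ ≤ x) (hx1 : x ≤ 1) :
    Int.log 2 x ∈ Icc (-(Nat.clog 2 N : ℤ)) 0 := by
  have hN0 : (0 : ℝ) < (N : ℝ)⁻¹ := by positivity
  have hlower := Int.log_mono_right (b := 2) hN0 hx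
  have hupper := Int.log_mono_right (b := 2) (hN0.trans_le hx) hx1
  rw [Int.log_inv, Int.clog_natCast] at hlower
  rw [Int.log_one_right] at hupper
  exact mem_Icc.2 ⟨hlower, hupper⟩

theorem exists_isDyadicOfCard_gcdForm_self_le {T : Finset ℕ} {c : ℕ → ℝ} {N B : ℕ}
    (hT : T.Nonempty) (hTB : ∀ m ∈ T, 0 < m ∧ m ≤ B) (hTN : #T ≤ N)
    (hc : ∀ m ∈ T, (N : ℝ)⁻¹ ≤ c m ∧ c m ≤ 1) :
    ∃ M, IsDyadicOfCard M N ∧ N * gcdForm T c c ≤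
      8 * ((Nat.clog 2 N + 1) * (Nat.log 2 B + 1)) * (∑ m ∈ T, c m ^ 2) * gcdForm M 1 1 := by
  have hN : N ≠ 0 := (hT.card_pos.trans_le hTN).ne'
  have hN0 : (0 : ℝ) < (N : ℝ)⁻¹ := by positivity
  have hc0 : ∀ m ∈ T, 0 < c m := fun m hm => hN0.trans_le (hc m hm).1
  set κ : ℕ → ℤ × ℕ := fun m => (Int.log 2 (c m), Nat.log 2 m)
  have hκcard : #(T.image κ) ≤ (Nat.clog 2 N + 1) * (Nat.log 2 B + 1) := by
    have hsub : T.image κ ⊆ Icc (-(Nat.clog 2 N : ℤ)) 0 ×ˢ range (Nat.log 2 B + 1) := by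
      refine image_subset_iff.2 fun m hm => mem_product.2
        ⟨intLog_two_mem_Icc hN (hc m hm).1 (hc m hm).2, mem_range_succ_iff.2 ?_⟩
      exact Nat.log_mono_right (b := 2) (hTB m hm).2
    have := card_le_card hsub
    rw [card_product, Int.card_Icc, card_range] at this
    convert this using 2
    omega
  obtain ⟨A, hAT, hA, hAκ, hform⟩ := exists_subset_gcdForm_one_ge hT hc0 κ fun a _ b hb hab =>
    le_two_mul_of_intLog_two_eq (hc0 b hb) (Prod.ext_iff.1 hab).1
  have hA0 : ∀ a ∈ A, 0 < a := fun a ha => (hTB a (hAT ha)).1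
  obtain ⟨M, hM, hAM⟩ := exists_isDyadicOfCard_gcdForm_one_ge hA0
    (fun a ha b hb => lt_two_mul_of_natLog_two_eq (hA0 b hb).ne'
      (Prod.ext_iff.1 (hAκ a ha b hb)).2) hA ((card_le_card hAT).trans hTN)
  refine ⟨M, hM, le_of_mul_le_mul_right ?_ (Nat.cast_pos.2 hA.card_pos)⟩
  have hM0 := gcdForm_one_nonneg M
  have hT2 : 0 ≤ ∑ m ∈ T, c m ^ 2 := sum_nonneg fun m _ => sq_nonneg (c m)
  calc N * gcdForm T c c * #A = N * (gcdForm T c c * #A) := by ring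
    _ ≤ N * (2 ^ 2 * #(T.image κ) * (∑ m ∈ T, c m ^ 2) * gcdForm A 1 1) :=
        mul_le_mul_of_nonneg_left hform N.cast_nonneg
    _ = 4 * #(T.image κ) * (∑ m ∈ T, c m ^ 2) * (N * gcdForm A 1 1) := by ring
    _ ≤ 4 * #(T.image κ) * (∑ m ∈ T, c m ^ 2) * (2 * #A * gcdForm M 1 1) := by gcongr
    _ ≤ 4 * ((Nat.clog 2 N + 1) * (Nat.log 2 B + 1)) * (∑ m ∈ T, c m ^ 2) *
          (2 * #A * gcdForm M 1 1) := by
        gcongr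
        exact_mod_cast hκcard
    _ = _ := by ring

end Unweighting

/-- The weight of an exponent `a ∈ {0, 1, 2}`: the central exponent `1` has weight `1`, the other
two have weight `x`. -/
noncomputable def localWeight (x : ℝ) (a : ℕ) : ℝ := if a = 1 then 1 else x

/-- The weight `∏_{p ∈ P} localWeight (f p) (v_p n)` on the divisors `n` of `∏_{p ∈ P} p²`. -/
noncomputable def primeWeight (P : Finset ℕ) (f : ℕ → ℝ) (n : ℕ) : ℝ :=
  ∏ p ∈ P, localWeight (f p) (n.factorization p)

/-- The value of `gcdForm` on the divisors of `p²` for the local weights of `x` and `y`, which is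
the Euler factor of `gcdForm` for product weights. -/
noncomputable def localForm (p : ℕ) (x y : ℝ) : ℝ :=
  1 + 2 * x * y + 2 * (x + y) / √p + 2 * x * y / p

section ProductWeights

variable {P : Finset ℕ} {f g : ℕ → ℝ} {n : ℕ} {x y : ℝ}

lemma localWeight_pos (hx : 0 < x) (a : ℕ) : 0 < localWeight x a := by
  rw [localWeight]
  split_ifs <;> linarith

lemma localWeight_le_one (hx : x ≤ 1) (a : ℕ) : localWeight x a ≤ 1 := by
  rw [localWeight]
  split_ifs <;> linarith

lemma localWeight_rpow (x s : ℝ) (a : ℕ) : localWeight x a ^ s = localWeight (x ^ s) a := by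
  rw [localWeight, localWeight, apply_ite (· ^ s), one_rpow]

lemma sum_range_three_localWeight_sq (x : ℝ) :
    ∑ a ∈ range 3, localWeight x a ^ 2 = 1 + 2 * x ^ 2 := by
  simp [sum_range_succ, localWeight]
  ring

lemma sum_range_three_localWeight_mul_gcdKernel {p : ℕ} (hp : p ≠ 0) (x y : ℝ) :
    ∑ a ∈ range 3, ∑ b ∈ range 3,
      localWeight x a * localWeight y b * gcdKernel (p ^ a) (p ^ b) = localForm p x y := by
  have hp0 : (0 : ℝ) < p := by positivity
  have hadj : gcdKernel 1 p = 1 / √p := by simp [gcdKernel]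
  have hadj' : gcdKernel p (p ^ 2) = 1 / √p := by
    simpa [sq, hadj] using gcdKernel_mul_left hp 1 p
  have hends : gcdKernel 1 (p ^ 2) = 1 / p := by
    rw [gcdKernel_eq_div]
    simp [sqrt_sq hp0.le]
  simp only [sum_range_succ, range_zero, sum_empty, zero_add, localWeight, pow_zero, pow_one,
    gcdKernel_self hp, gcdKernel_self one_ne_zero, gcdKernel_self (pow_ne_zero 2 hp),
    gcdKernel_comm p 1, gcdKernel_comm (p ^ 2) 1, gcdKernel_comm (p ^ 2) p, hadj, hadj', hends,
    localForm]
  norm_num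
  ring

lemma sum_divisors_mul_of_coprime {R : Type*} [AddCommMonoid R] {m n : ℕ} (hmn : m.Coprime n)
    (F : ℕ → R) :
    ∑ d ∈ (m * n).divisors, F d = ∑ a ∈ m.divisors, ∑ b ∈ n.divisors, F (a * b) := by
  rw [Nat.divisors_mul, mul_def, sum_image hmn.mul_injOn_divisors, sum_product]

lemma coprime_pow_prod_pow {q : ℕ} (hq : q.Prime) (hP : ∀ p ∈ P, p.Prime) (hqP : q ∉ P)
    (i : ℕ) (k : ℕ → ℕ) : (q ^ i).Coprime (∏ p ∈ P, p ^ k p) :=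
  Nat.Coprime.prod_right fun p hp => Nat.Coprime.pow _ _ <|
    (Nat.coprime_primes hq (hP p hp)).2 fun h => hqP (h ▸ hp)

lemma sum_divisors_prod_pow_eq_prod_sum {R : Type*} [CommSemiring R] (hP : ∀ p ∈ P, p.Prime)
    (k : ℕ) (h : ℕ → ℕ → R) :
    ∑ n ∈ (∏ p ∈ P, p ^ k).divisors, ∏ p ∈ P, h p (n.factorization p) =
      ∏ p ∈ P, ∑ a ∈ range (k + 1), h p a := by
  induction P using Finset.induction_on with
  | empty => simp
  | insert q P hqP ih =>
    have hq : q.Prime := hP q (mem_insert_self q P)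
    have hP' : ∀ p ∈ P, p.Prime := fun p hp => hP p (mem_insert_of_mem hp)
    have hcop := coprime_pow_prod_pow hq hP' hqP
    have hterm : ∀ a ∈ range (k + 1), ∀ n ∈ (∏ p ∈ P, p ^ k).divisors,
        ∏ p ∈ insert q P, h p ((q ^ a * n).factorization p) =
          h q a * ∏ p ∈ P, h p (n.factorization p) := by
      intro a _ n hn
      have hn0 : n ≠ 0 := (Nat.pos_of_mem_divisors hn).ne'
      have hqn : n.factorization q = 0 := Nat.factorization_eq_zero_of_not_dvd <|
        hq.coprime_iff_not_dvd.1 <| by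
          simpa using (hcop 1 fun _ => k).coprime_dvd_right (Nat.dvd_of_mem_divisors hn)
      rw [prod_insert hqP, Nat.factorization_mul (pow_ne_zero a hq.ne_zero) hn0]
      congr 1
      · simp [hq.factorization_self, hqn]
      · refine prod_congr rfl fun p hp => ?_
        have hpq : p ≠ q := fun hpq => hqP (hpq ▸ hp)
        simp [hq.factorization, hpq.symm]
    rw [prod_insert hqP, sum_divisors_mul_of_coprime (hcop k fun _ => k),
      Nat.divisors_prime_pow hq, sum_map, prod_insert hqP, ← ih hP', sum_mul_sum]
    exact sum_congr rfl fun a ha => sum_congr rfl fun n hn => hterm a ha n hn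

lemma gcdKernel_prod_pow (hP : ∀ p ∈ P, p.Prime) (i j : ℕ → ℕ) :
    gcdKernel (∏ p ∈ P, p ^ i p) (∏ p ∈ P, p ^ j p) =
      ∏ p ∈ P, gcdKernel (p ^ i p) (p ^ j p) := by
  induction P using Finset.induction_on with
  | empty => simp [gcdKernel_self]
  | insert q P hqP ih =>
    have hcop := coprime_pow_prod_pow (hP q (mem_insert_self q P))
      (fun p hp => hP p (mem_insert_of_mem hp)) hqP
    rw [prod_insert hqP, prod_insert hqP, prod_insert hqP, gcdKernel_mul_mul_of_coprime,
      ih fun p hp => hP p (mem_insert_of_mem hp)]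
    rw [← pow_add]
    exact (hcop _ i).mul_right (hcop _ j)

lemma prod_pow_factorization_eq_of_mem_divisors {k : ℕ} (hP : ∀ p ∈ P, p.Prime)
    (hn : n ∈ (∏ p ∈ P, p ^ k).divisors) : ∏ p ∈ P, p ^ n.factorization p = n := by
  have hsupp : n.factorization.support ⊆ P := by
    intro q hq
    rw [Nat.support_factorization] at hq
    have hqP : q ∣ ∏ p ∈ P, p ^ k :=
      (Nat.dvd_of_mem_primeFactors hq).trans (Nat.dvd_of_mem_divisors hn)
    obtain ⟨p, hp, hqp⟩ :=
      ((Nat.prime_of_mem_primeFactors hq).prime.dvd_finsetProd_iff _).1 hqP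
    rwa [(Nat.prime_dvd_prime_iff_eq (Nat.prime_of_mem_primeFactors hq) (hP p hp)).1
      ((Nat.prime_of_mem_primeFactors hq).dvd_of_dvd_pow hqp)]
  rw [← Finsupp.prod_of_support_subset _ hsupp _ fun _ _ => pow_zero _]
  exact Nat.prod_factorization_pow_eq_self (Nat.pos_of_mem_divisors hn).ne'

lemma primeWeight_pos (hf : ∀ p ∈ P, 0 < f p) (n : ℕ) : 0 < primeWeight P f n :=
  prod_pos fun p hp => localWeight_pos (hf p hp) _

lemma primeWeight_le_one (hf0 : ∀ p ∈ P, 0 < f p) (hf1 : ∀ p ∈ P, f p ≤ 1) (n : ℕ) :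
    primeWeight P f n ≤ 1 :=
  prod_le_one (fun p hp => (localWeight_pos (hf0 p hp) _).le)
    fun p hp => localWeight_le_one (hf1 p hp) _

lemma primeWeight_rpow (hf : ∀ p ∈ P, 0 < f p) (s : ℝ) (n : ℕ) :
    primeWeight P f n ^ s = primeWeight P (fun p => f p ^ s) n := by
  rw [primeWeight, ← finsetProd_rpow _ _ fun p hp => (localWeight_pos (hf p hp) _).le]
  exact prod_congr rfl fun p _ => localWeight_rpow (f p) s _

lemma sum_divisors_primeWeight_sq (hP : ∀ p ∈ P, p.Prime) (f : ℕ → ℝ) :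
    ∑ n ∈ (∏ p ∈ P, p ^ 2).divisors, primeWeight P f n ^ 2 = ∏ p ∈ P, (1 + 2 * f p ^ 2) := by
  simp_rw [primeWeight, ← prod_pow, ← sum_range_three_localWeight_sq]
  exact sum_divisors_prod_pow_eq_prod_sum hP 2 fun p a => localWeight (f p) a ^ 2

lemma gcdForm_divisors_primeWeight (hP : ∀ p ∈ P, p.Prime) (f g : ℕ → ℝ) :
    gcdForm (∏ p ∈ P, p ^ 2).divisors (primeWeight P f) (primeWeight P g) =
      ∏ p ∈ P, localForm p (f p) (g p) := by
  set h : ℕ → ℕ → ℕ → ℝ := fun p a b =>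
    localWeight (f p) a * localWeight (g p) b * gcdKernel (p ^ a) (p ^ b)
  have hterm : ∀ m ∈ (∏ p ∈ P, p ^ 2).divisors, ∀ n ∈ (∏ p ∈ P, p ^ 2).divisors,
      primeWeight P f m * primeWeight P g n * gcdKernel m n =
        ∏ p ∈ P, h p (m.factorization p) (n.factorization p) := by
    intro m hm n hn
    have hkernel := gcdKernel_prod_pow hP m.factorization n.factorization
    rw [prod_pow_factorization_eq_of_mem_divisors hP hm,
      prod_pow_factorization_eq_of_mem_divisors hP hn] at hkernel
    rw [primeWeight, primeWeight, hkernel, ← prod_mul_distrib, ← prod_mul_distrib]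
  calc gcdForm (∏ p ∈ P, p ^ 2).divisors (primeWeight P f) (primeWeight P g)
      = ∑ m ∈ (∏ p ∈ P, p ^ 2).divisors, ∑ n ∈ (∏ p ∈ P, p ^ 2).divisors,
          ∏ p ∈ P, h p (m.factorization p) (n.factorization p) :=
        sum_congr rfl fun m hm => sum_congr rfl fun n hn => hterm m hm n hn
    _ = ∑ m ∈ (∏ p ∈ P, p ^ 2).divisors, ∏ p ∈ P, ∑ b ∈ range 3, h p (m.factorization p) b :=
        sum_congr rfl fun m _ =>
          sum_divisors_prod_pow_eq_prod_sum hP 2 fun p b => h p (m.factorization p) b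
    _ = ∏ p ∈ P, ∑ a ∈ range 3, ∑ b ∈ range 3, h p a b :=
        sum_divisors_prod_pow_eq_prod_sum hP 2 fun p a => ∑ b ∈ range 3, h p a b
    _ = _ := prod_congr rfl fun p hp =>
        sum_range_three_localWeight_mul_gcdKernel (hP p hp).ne_zero (f p) (g p)

lemma one_le_localForm {p : ℕ} (hx : 0 ≤ x) (hy : 0 ≤ y) : 1 ≤ localForm p x y := by
  have : 0 ≤ 2 * x * y + 2 * (x + y) / √p + 2 * x * y / p := by positivity
  rw [localForm]
  linarith

end ProductWeights

section Rankin

variable {P : Finset ℕ} {f : ℕ → ℝ}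

lemma gcdForm_self_le_add_two_mul {S T : Finset ℕ} {c d : ℕ → ℝ} (hc : ∀ m ∈ T, 0 ≤ c m)
    (hd : ∀ m ∈ T, 0 ≤ d m) (hST : S ⊆ T) (hcd : ∀ m ∈ T, m ∉ S → c m ≤ d m) :
    gcdForm T c c ≤ gcdForm S c c + 2 * gcdForm T d c := by
  have hswap : gcdForm T d c = gcdForm T c d := by
    rw [gcdForm, gcdForm, sum_comm]
    exact sum_congr rfl fun m _ => sum_congr rfl fun n _ => by rw [gcdKernel_comm, mul_comm (d n)]
  have hS : gcdForm S c c =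
      ∑ m ∈ T, ∑ n ∈ T, if m ∈ S ∧ n ∈ S then c m * c n * gcdKernel m n else 0 := by
    simp only [gcdForm, ite_and, sum_ite_mem, inter_eq_right.2 hST, sum_ite_irrel, sum_const_zero]
  have hterm : ∀ m ∈ T, ∀ n ∈ T, c m * c n * gcdKernel m n ≤
      (if m ∈ S ∧ n ∈ S then c m * c n * gcdKernel m n else 0) +
        (d m * c n * gcdKernel m n + c m * d n * gcdKernel m n) := by
    intro m hm n hn
    have hκ := gcdKernel_nonneg m n
    have hdc : 0 ≤ d m * c n * gcdKernel m n := mul_nonneg (mul_nonneg (hd m hm) (hc n hn)) hκ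
    have hcd' : 0 ≤ c m * d n * gcdKernel m n := mul_nonneg (mul_nonneg (hc m hm) (hd n hn)) hκ
    by_cases hmS : m ∈ S
    · by_cases hnS : n ∈ S
      · simp only [hmS, hnS, and_self, if_true]
        linarith
      · have := mul_le_mul_of_nonneg_right
          (mul_le_mul_of_nonneg_left (hcd n hn hnS) (hc m hm)) hκ
        simp only [hnS, and_false, if_false]
        linarith
    · have := mul_le_mul_of_nonneg_right
        (mul_le_mul_of_nonneg_right (hcd m hm hmS) (hc n hn)) hκ
      simp only [hmS, false_and, if_false]
      linarith
  calc gcdForm T c c ≤ gcdForm S c c + (gcdForm T d c + gcdForm T c d) := by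
        rw [hS]
        simp only [gcdForm, ← sum_add_distrib]
        exact sum_le_sum fun m hm => sum_le_sum fun n hn => hterm m hm n hn
    _ = gcdForm S c c + 2 * gcdForm T d c := by rw [hswap]; ring

lemma le_rpow_half_mul_rpow_one_sub {x y s : ℝ} (hx : 0 < x) (hs : 0 ≤ s) (hxy : x ^ 2 ≤ y) :
    x ≤ y ^ (s / 2) * x ^ (1 - s) :=
  calc x = (x ^ 2) ^ (s / 2) * x ^ (1 - s) := by
        rw [← rpow_natCast_mul hx.le, ← rpow_add hx]
        norm_num [mul_div_cancel₀]
    _ ≤ y ^ (s / 2) * x ^ (1 - s) := by gcongr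

lemma card_filter_sum_div_le {S : Finset ℕ} {g : ℕ → ℝ} {N : ℕ} (hg : ∀ n ∈ S, 0 ≤ g n)
    (hpos : 0 < ∑ n ∈ S, g n) (hN : N ≠ 0) : #{n ∈ S | (∑ n ∈ S, g n) / N ≤ g n} ≤ N := by
  set Z := ∑ n ∈ S, g n
  have hmarkov : #{n ∈ S | Z / N ≤ g n} * (Z / N) ≤ Z :=
    calc #{n ∈ S | Z / N ≤ g n} * (Z / N) ≤ ∑ n ∈ S with Z / N ≤ g n, g n := by
          rw [← nsmul_eq_mul]
          exact card_nsmul_le_sum _ _ _ fun n hn => (mem_filter.1 hn).2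
      _ ≤ Z := sum_le_sum_of_subset_of_nonneg (filter_subset _ _) fun n hn _ => hg n hn
  rw [mul_div_assoc', div_le_iff₀ (by positivity), mul_comm] at hmarkov
  exact_mod_cast le_of_mul_le_mul_left hmarkov hpos

lemma inv_le_of_div_le_sq {x Z a : ℝ} (ha : 0 ≤ a) (hZ : 1 ≤ Z) (hx0 : 0 ≤ x) (hx1 : x ≤ 1)
    (hx : Z / a ≤ x ^ 2) : a⁻¹ ≤ x :=
  calc a⁻¹ ≤ Z / a := by rw [inv_eq_one_div]; gcongr
    _ ≤ x ^ 2 := hx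
    _ ≤ x := pow_le_of_le_one hx0 hx1 two_ne_zero

-- Rankin's trick: the part of the form on which the weight is small is dominated by the full form
-- of the larger weights `c ^ (1 - s)`.
lemma prod_localForm_le_two_mul_gcdForm_filter {s y : ℝ} (hP : ∀ p ∈ P, p.Prime)
    (hf : ∀ p ∈ P, 0 < f p) (hs : 0 ≤ s) (hy : 0 ≤ y)
    (htail : y ^ (s / 2) * ∏ p ∈ P, localForm p (f p ^ (1 - s)) (f p) ≤
      (∏ p ∈ P, localForm p (f p) (f p)) / 4) :
    ∏ p ∈ P, localForm p (f p) (f p) ≤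
      2 * gcdForm {n ∈ (∏ p ∈ P, p ^ 2).divisors | y ≤ primeWeight P f n ^ 2}
        (primeWeight P f) (primeWeight P f) := by
  set D := (∏ p ∈ P, p ^ 2).divisors
  set c := primeWeight P f
  have hc : ∀ n, 0 < c n := primeWeight_pos hf
  have hsplit := gcdForm_self_le_add_two_mul (T := D) (S := {n ∈ D | y ≤ c n ^ 2})
    (d := fun n => y ^ (s / 2) * c n ^ (1 - s)) (fun n _ => (hc n).le)
    (fun n _ => by have := hc n; positivity) (filter_subset _ _) fun n hn hnS =>
      le_rpow_half_mul_rpow_one_sub (hc n) hs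
        (not_le.1 fun hle => hnS (mem_filter.2 ⟨hn, hle⟩)).le
  have hdc : gcdForm D (fun n => y ^ (s / 2) * c n ^ (1 - s)) c =
      y ^ (s / 2) * ∏ p ∈ P, localForm p (f p ^ (1 - s)) (f p) := by
    rw [← gcdForm_divisors_primeWeight hP (fun p => f p ^ (1 - s)) f]
    simp only [gcdForm, mul_sum, mul_assoc, c, primeWeight_rpow hf, D]
  rw [hdc, gcdForm_divisors_primeWeight hP] at hsplit
  linarith

theorem exists_isDyadicOfCard_prod_localForm_le {N : ℕ} {s : ℝ} (hP : ∀ p ∈ P, p.Prime)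
    (hf0 : ∀ p ∈ P, 0 < f p) (hf1 : ∀ p ∈ P, f p ≤ 1) (hs : 0 ≤ s) (hN : N ≠ 0)
    (htail : ((∏ p ∈ P, (1 + 2 * f p ^ 2)) / N) ^ (s / 2) *
        ∏ p ∈ P, localForm p (f p ^ (1 - s)) (f p) ≤
      (∏ p ∈ P, localForm p (f p) (f p)) / 4) :
    ∃ M, IsDyadicOfCard M N ∧ N * ∏ p ∈ P, localForm p (f p) (f p) ≤
      16 * ((Nat.clog 2 N + 1) * (Nat.log 2 (∏ p ∈ P, p ^ 2) + 1)) *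
        (∏ p ∈ P, (1 + 2 * f p ^ 2)) * gcdForm M 1 1 := by
  set Z := ∏ p ∈ P, (1 + 2 * f p ^ 2)
  set D := (∏ p ∈ P, p ^ 2).divisors
  set c := primeWeight P f
  set T : Finset ℕ := {n ∈ D | Z / N ≤ c n ^ 2}
  have hZ1 : 1 ≤ Z := one_le_prod fun p _ => by nlinarith [sq_nonneg (f p)]
  have hc0 : ∀ n, 0 < c n := primeWeight_pos hf0
  have hc1 : ∀ n, c n ≤ 1 := primeWeight_le_one hf0 hf1
  have hZ : ∑ n ∈ D, c n ^ 2 = Z := sum_divisors_primeWeight_sq hP f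
  have hform : ∏ p ∈ P, localForm p (f p) (f p) ≤ 2 * gcdForm T c c :=
    prod_localForm_le_two_mul_gcdForm_filter hP hf0 hs (by positivity) htail
  have hT : T.Nonempty := by
    rw [nonempty_iff_ne_empty]
    intro hT
    have hQ : 1 ≤ ∏ p ∈ P, localForm p (f p) (f p) :=
      one_le_prod fun p hp => one_le_localForm (hf0 p hp).le (hf0 p hp).le
    rw [hT, gcdForm, sum_empty] at hform
    linarith
  have hTN : #T ≤ N := by
    have := card_filter_sum_div_le (fun n _ => sq_nonneg (c n))
      (hZ ▸ zero_lt_one.trans_le hZ1 : 0 < ∑ n ∈ D, c n ^ 2) hN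
    rwa [hZ] at this
  have hTB : ∀ m ∈ T, 0 < m ∧ m ≤ ∏ p ∈ P, p ^ 2 := fun m hm =>
    ⟨Nat.pos_of_mem_divisors (mem_filter.1 hm).1, Nat.divisor_le (mem_filter.1 hm).1⟩
  obtain ⟨M, hM, hTM⟩ := exists_isDyadicOfCard_gcdForm_self_le hT hTB hTN fun m hm =>
    ⟨inv_le_of_div_le_sq N.cast_nonneg hZ1 (hc0 m).le (hc1 m) (mem_filter.1 hm).2, hc1 m⟩
  have hM0 := gcdForm_one_nonneg M
  refine ⟨M, hM, ?_⟩
  calc N * ∏ p ∈ P, localForm p (f p) (f p) ≤ N * (2 * gcdForm T c c) := by gcongr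
    _ = 2 * (N * gcdForm T c c) := by ring
    _ ≤ 2 * (8 * ((Nat.clog 2 N + 1) * (Nat.log 2 (∏ p ∈ P, p ^ 2) + 1)) *
          (∑ m ∈ T, c m ^ 2) * gcdForm M 1 1) := by gcongr
    _ ≤ 2 * (8 * ((Nat.clog 2 N + 1) * (Nat.log 2 (∏ p ∈ P, p ^ 2) + 1)) *
          Z * gcdForm M 1 1) := by
        gcongr
        exact hZ ▸ sum_le_sum_of_subset_of_nonneg (filter_subset _ _) fun n _ _ => sq_nonneg (c n)
    _ = _ := by ring

end Rankin

/-- The weights `f p`, `p ∈ P`, lie in the range where the Euler factor `localForm p (f p) (f p)` is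
`1 + 2 * f p ^ 2` up to lower order terms, even after `f p` has been replaced by `f p ^ (1 - s)`;
the parameter `δ` measures the relative errors. -/
structure IsTame (P : Finset ℕ) (f : ℕ → ℝ) (s δ : ℝ) : Prop where
  prime : ∀ p ∈ P, p.Prime
  pos : ∀ p ∈ P, 0 < f p
  inv_le_neg_log : ∀ p ∈ P, δ⁻¹ ≤ -log (f p)
  mul_neg_log_le : ∀ p ∈ P, s * -log (f p) ≤ δ
  div_sqrt_le : ∀ p ∈ P, f p / √p ≤ δ * f p ^ 2
  inv_le : ∀ p ∈ P, (p : ℝ)⁻¹ ≤ δ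

section LocalEstimates

variable {p : ℕ} {x s δ : ℝ}

lemma localForm_rpow_le (hx : 0 < x) (hs : 0 ≤ s) (hδ : δ ≤ 1) (hlog : 0 ≤ -log x)
    (hslog : s * -log x ≤ δ) (hxp : x / √p ≤ δ * x ^ 2) (hpδ : (p : ℝ)⁻¹ ≤ δ) :
    localForm p (x ^ (1 - s)) x ≤
      localForm p x x * exp (2 * s * ((1 + δ) * (1 + 2 * δ)) * (x ^ 2 * -log x)) := by
  set v := s * -log x
  have hv : 0 ≤ v := mul_nonneg hs hlog
  have hδ0 : 0 ≤ δ := hv.trans hslog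
  have hpow : x ^ (1 - s) = x * exp v := by
    rw [sub_eq_add_neg, rpow_add hx, rpow_one, rpow_def_of_pos hx]
    congr 2
    ring
  have hexp : exp v - 1 ≤ v * (1 + δ) := by
    have := (abs_le.1 (abs_exp_sub_one_sub_id_le
      (show |v| ≤ 1 by rw [abs_of_nonneg hv]; linarith))).2
    nlinarith
  have hfactor : 2 * x ^ 2 * (1 + (p : ℝ)⁻¹) + 2 * (x / √p) ≤ 2 * x ^ 2 * (1 + 2 * δ) := by
    nlinarith [sq_nonneg x]
  have hone : 1 ≤ localForm p x x := one_le_localForm hx.le hx.le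
  set E := 2 * s * ((1 + δ) * (1 + 2 * δ)) * (x ^ 2 * -log x)
  have hE : E = v * (1 + δ) * (2 * x ^ 2 * (1 + 2 * δ)) := by ring
  have hE0 : 0 ≤ E := by rw [hE]; positivity
  calc localForm p (x ^ (1 - s)) x
      = localForm p x x + (exp v - 1) * (2 * x ^ 2 * (1 + (p : ℝ)⁻¹) + 2 * (x / √p)) := by
        rw [hpow, localForm, localForm]; ring
    _ ≤ localForm p x x + E := by rw [hE]; gcongr
    _ ≤ localForm p x x + localForm p x x * E := by gcongr; exact le_mul_of_one_le_left hE0 hone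
    _ = localForm p x x * (E + 1) := by ring
    _ ≤ localForm p x x * exp E := by gcongr; exact add_one_le_exp E

lemma le_localForm_self (hx : 0 ≤ x) (hxδ : 2 * x ^ 2 + 4 * (x / √p) ≤ δ) :
    (1 + 2 * x ^ 2) * exp ((1 - δ) * (4 * (x / √p))) ≤ localForm p x x := by
  set w := 2 * x ^ 2
  set z := 4 * (x / √p)
  have hw : 0 ≤ w := by positivity
  have hz : 0 ≤ z := by positivity
  have hlin : 1 + w ≤ (1 + w + z) * (-((1 - δ) * z) + 1) := by
    have : (1 - δ) * (1 + w + z) ≤ 1 := by nlinarith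
    nlinarith
  calc (1 + w) * exp ((1 - δ) * z)
      ≤ (1 + w + z) * exp (-((1 - δ) * z)) * exp ((1 - δ) * z) := by
        gcongr
        exact hlin.trans (mul_le_mul_of_nonneg_left (add_one_le_exp _) (by positivity))
    _ = 1 + w + z := by rw [mul_assoc, ← exp_add]; simp
    _ ≤ 1 + w + z + 2 * x * x / p := le_add_of_nonneg_right (by positivity)
    _ = localForm p x x := by rw [localForm]; ring

lemma rankin_exponent_le {E L : ℝ} (hδ0 : 0 ≤ δ) (hδ1 : δ ≤ 1 / 100) (hL : 0 ≤ L) (hE : 0 ≤ E)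
    (hEL : 4 * E ≤ (1 - 6 * δ) * L) :
    2 * δ * E + 4 * ((1 + δ) * (1 + 2 * δ)) * E - L ≤ -(δ * L) := by
  have hcoeff : δ / 2 + (1 + δ) * (1 + 2 * δ) ≤ 1 + 5 * δ := by nlinarith
  calc 2 * δ * E + 4 * ((1 + δ) * (1 + 2 * δ)) * E - L
      = (δ / 2 + (1 + δ) * (1 + 2 * δ)) * (4 * E) - L := by ring
    _ ≤ (1 + 5 * δ) * ((1 - 6 * δ) * L) - L := by gcongr
    _ ≤ -(δ * L) := by nlinarith [mul_nonneg (sq_nonneg δ) hL]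

end LocalEstimates

namespace IsTame

variable {P : Finset ℕ} {f : ℕ → ℝ} {s δ : ℝ}

lemma neg_log_nonneg (h : IsTame P f s δ) (hδ : 0 < δ) {p : ℕ} (hp : p ∈ P) : 0 ≤ -log (f p) :=
  (inv_pos.2 hδ).le.trans (h.inv_le_neg_log p hp)

lemma le_delta (h : IsTame P f s δ) (hδ : 0 < δ) {p : ℕ} (hp : p ∈ P) : f p ≤ δ := by
  have hexp := add_one_le_exp (-log (f p))
  rw [exp_neg, exp_log (h.pos p hp)] at hexp
  exact (inv_le_inv₀ hδ (h.pos p hp)).1 (by linarith [h.inv_le_neg_log p hp])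

lemma prod_localForm_rpow_le (h : IsTame P f s δ) (hs : 0 ≤ s) (hδ0 : 0 < δ) (hδ1 : δ ≤ 1) :
    ∏ p ∈ P, localForm p (f p ^ (1 - s)) (f p) ≤ (∏ p ∈ P, localForm p (f p) (f p)) *
      exp (2 * s * ((1 + δ) * (1 + 2 * δ)) * ∑ p ∈ P, f p ^ 2 * -log (f p)) := by
  rw [mul_sum, exp_sum, ← prod_mul_distrib]
  refine prod_le_prod (fun p hp => ?_) fun p hp => localForm_rpow_le (h.pos p hp) hs hδ1
    (h.neg_log_nonneg hδ0 hp) (h.mul_neg_log_le p hp) (h.div_sqrt_le p hp) (h.inv_le p hp)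
  have hfp := h.pos p hp
  exact zero_le_one.trans (one_le_localForm (by positivity) hfp.le)

lemma prod_one_add_two_mul_sq_le (h : IsTame P f s δ) (hδ : 0 < δ) :
    ∏ p ∈ P, (1 + 2 * f p ^ 2) ≤ exp (2 * δ * ∑ p ∈ P, f p ^ 2 * -log (f p)) := by
  rw [mul_sum, exp_sum]
  refine prod_le_prod (fun p _ => by positivity) fun p hp => ?_
  have hlog : 1 ≤ δ * -log (f p) := (inv_le_iff_one_le_mul₀' hδ).1 (h.inv_le_neg_log p hp)
  calc 1 + 2 * f p ^ 2 ≤ 2 * δ * (f p ^ 2 * -log (f p)) + 1 := by nlinarith [sq_nonneg (f p)]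
    _ ≤ _ := add_one_le_exp _

lemma rankin_tail_le (h : IsTame P f s δ) {N : ℕ} (hs : 0 ≤ s) (hδ0 : 0 < δ) (hδ1 : δ ≤ 1 / 100)
    (hN : N ≠ 0) (hentropy : 4 * ∑ p ∈ P, f p ^ 2 * -log (f p) ≤ (1 - 6 * δ) * log N)
    (hsN : log 4 ≤ s / 2 * (δ * log N)) :
    ((∏ p ∈ P, (1 + 2 * f p ^ 2)) / N) ^ (s / 2) * ∏ p ∈ P, localForm p (f p ^ (1 - s)) (f p) ≤
      (∏ p ∈ P, localForm p (f p) (f p)) / 4 := by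
  set E := ∑ p ∈ P, f p ^ 2 * -log (f p)
  set Q := ∏ p ∈ P, localForm p (f p) (f p)
  set Z := ∏ p ∈ P, (1 + 2 * f p ^ 2)
  have hN0 : (0 : ℝ) < N := by positivity
  have hQ : 0 ≤ Q := prod_nonneg fun p hp =>
    zero_le_one.trans (one_le_localForm (h.pos p hp).le (h.pos p hp).le)
  have : 0 ≤ Z := prod_nonneg fun p _ => by positivity
  have hZexp : Z ≤ exp (2 * δ * E) := h.prod_one_add_two_mul_sq_le hδ0
  have hQs : 0 ≤ ∏ p ∈ P, localForm p (f p ^ (1 - s)) (f p) := prod_nonneg fun p hp =>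
    zero_le_one.trans (one_le_localForm (rpow_nonneg (h.pos p hp).le _) (h.pos p hp).le)
  have hE : 0 ≤ E := sum_nonneg fun p hp => mul_nonneg (sq_nonneg _) (h.neg_log_nonneg hδ0 hp)
  have hexponent := rankin_exponent_le hδ0.le hδ1 (log_natCast_nonneg N) hE hentropy
  calc (Z / N) ^ (s / 2) * ∏ p ∈ P, localForm p (f p ^ (1 - s)) (f p)
      ≤ (exp (2 * δ * E) / exp (log N)) ^ (s / 2) *
          (Q * exp (2 * s * ((1 + δ) * (1 + 2 * δ)) * E)) := by
        rw [exp_log hN0]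
        exact mul_le_mul (rpow_le_rpow (by positivity) (by gcongr) (by positivity))
          (h.prod_localForm_rpow_le hs hδ0 (by linarith)) hQs (by positivity)
    _ = Q * exp (s / 2 * (2 * δ * E + 4 * ((1 + δ) * (1 + 2 * δ)) * E - log N)) := by
        rw [← exp_sub, ← exp_mul, mul_left_comm, ← exp_add]
        congr 2
        ring
    _ ≤ Q * exp (-log 4) := by
        gcongr
        linarith [mul_le_mul_of_nonneg_left hexponent (div_nonneg hs zero_le_two)]
    _ = Q / 4 := by rw [exp_neg, exp_log (by norm_num), div_eq_mul_inv]

lemma prod_mul_exp_le_prod_localForm (h : IsTame P f s δ) (hδ0 : 0 < δ) (hδ1 : δ ≤ 1 / 100) :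
    (∏ p ∈ P, (1 + 2 * f p ^ 2)) * exp ((1 - δ) * (4 * ∑ p ∈ P, f p / √p)) ≤
      ∏ p ∈ P, localForm p (f p) (f p) := by
  rw [mul_sum, mul_sum, exp_sum, ← prod_mul_distrib]
  refine prod_le_prod (fun p _ => by positivity) fun p hp =>
    le_localForm_self (h.pos p hp).le ?_
  have hsq : f p ^ 2 ≤ δ ^ 2 := pow_le_pow_left₀ (h.pos p hp).le (h.le_delta hδ0 hp) 2
  nlinarith [h.div_sqrt_le p hp]

end IsTame

lemma natLog_two_prod_primes_sq_le {P : Finset ℕ} {n : ℕ} (hP : ∀ p ∈ P, p.Prime ∧ p ≤ n) :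
    Nat.log 2 (∏ p ∈ P, p ^ 2) ≤ 4 * n := by
  have hprod : ∏ p ∈ P, p ≤ 4 ^ n :=
    calc ∏ p ∈ P, p ≤ ∏ p ∈ n.primesLE, p :=
          prod_le_prod_of_subset_of_one_le' (fun p hp => Nat.mem_primesLE.2 (hP p hp).symm)
            fun p hp _ => (Nat.mem_primesLE.1 hp).2.one_le
      _ = primorial n := (primorial_eq_prod_primesLE n).symm
      _ ≤ 4 ^ n := primorial_le_four_pow n
  calc Nat.log 2 (∏ p ∈ P, p ^ 2) ≤ Nat.log 2 (2 ^ (4 * n)) := by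
        refine Nat.log_mono_right ?_
        rw [prod_pow]
        calc (∏ p ∈ P, p) ^ 2 ≤ (4 ^ n) ^ 2 := Nat.pow_le_pow_left hprod 2
          _ = 2 ^ (4 * n) := by rw [← pow_mul, mul_comm, pow_mul, pow_mul]; norm_num
    _ = 4 * n := Nat.log_pow one_lt_two _

theorem IsTame.exists_isDyadicOfCard_exp_le {P : Finset ℕ} {f : ℕ → ℝ} {s δ : ℝ} {N n : ℕ}
    (h : IsTame P f s δ) (hPn : ∀ p ∈ P, p ≤ n) (hs : 0 ≤ s) (hδ0 : 0 < δ) (hδ1 : δ ≤ 1 / 100)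
    (hN : N ≠ 0) (hentropy : 4 * ∑ p ∈ P, f p ^ 2 * -log (f p) ≤ (1 - 6 * δ) * log N)
    (hsN : log 4 ≤ s / 2 * (δ * log N)) :
    ∃ M, IsDyadicOfCard M N ∧ N * exp ((1 - δ) * (4 * ∑ p ∈ P, f p / √p)) ≤
      16 * ((Nat.clog 2 N + 1) * (4 * n + 1)) * gcdForm M 1 1 := by
  obtain ⟨M, hM, hQM⟩ := exists_isDyadicOfCard_prod_localForm_le h.prime h.pos
    (fun p hp => (h.le_delta hδ0 hp).trans (by linarith)) hs hN
    (h.rankin_tail_le hs hδ0 hδ1 hN hentropy hsN)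
  refine ⟨M, hM, ?_⟩
  have hZ : 0 < ∏ p ∈ P, (1 + 2 * f p ^ 2) := prod_pos fun p _ => by positivity
  have hlog : (Nat.log 2 (∏ p ∈ P, p ^ 2) : ℝ) ≤ 4 * n := by
    exact_mod_cast natLog_two_prod_primes_sq_le fun p hp => ⟨h.prime p hp, hPn p hp⟩
  have hM0 := gcdForm_one_nonneg M
  refine le_of_mul_le_mul_left ?_ hZ
  calc _ = N * ((∏ p ∈ P, (1 + 2 * f p ^ 2)) * exp ((1 - δ) * (4 * ∑ p ∈ P, f p / √p))) := by
        ring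
    _ ≤ N * ∏ p ∈ P, localForm p (f p) (f p) := by
        gcongr
        exact h.prod_mul_exp_le_prod_localForm hδ0 hδ1
    _ ≤ 16 * ((Nat.clog 2 N + 1) * (Nat.log 2 (∏ p ∈ P, p ^ 2) + 1)) *
          (∏ p ∈ P, (1 + 2 * f p ^ 2)) * gcdForm M 1 1 := hQM
    _ ≤ 16 * ((Nat.clog 2 N + 1) * (4 * n + 1)) *
          (∏ p ∈ P, (1 + 2 * f p ^ 2)) * gcdForm M 1 1 := by gcongr
    _ = _ := by ring

/-- The primes `p` with `(log log L)² < log (p / L) ≤ δ log L`, on which the extremal weights are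
supported. -/
noncomputable def galPrimes (δ L : ℝ) : Finset ℕ :=
  primesBetween (L * exp (log (log L) ^ 2)) (L * exp (δ * log L))

/-- The sum over `galPrimes` that governs both the entropy of the extremal weights and the size of
the GCD sum they produce. -/
noncomputable def galSum (δ L : ℝ) : ℝ :=
  ∑ p ∈ galPrimes δ L, (p * log (p / L))⁻¹

section PrimeSums

variable {L δ a b : ℝ} {p : ℕ}

lemma mem_primesBetween_mul_exp (hL : 0 < L) :
    p ∈ primesBetween (L * exp a) (L * exp b) ↔ p.Prime ∧ a < log (p / L) ∧ log (p / L) ≤ b := by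
  rw [mem_primesBetween]
  refine and_congr_right fun hp => ?_
  have hp0 : (0 : ℝ) < p := by exact_mod_cast hp.pos
  rw [lt_log_iff_exp_lt (by positivity), log_le_iff_le_exp (by positivity), lt_div_iff₀' hL,
    div_le_iff₀' hL]

lemma sum_Ico_sum_primesBetween {x : ℕ → ℝ} (hx : Monotone x) {m n : ℕ} (hmn : m ≤ n)
    (g : ℕ → ℝ) :
    ∑ j ∈ Ico m n, ∑ p ∈ primesBetween (x j) (x (j + 1)), g p =
      ∑ p ∈ primesBetween (x m) (x n), g p := by
  simp_rw [sum_primesBetween_eq_sub (hx (Nat.le_succ _)), sum_primesBetween_eq_sub (hx hmn)]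
  exact sum_Ico_sub (fun j => ∑ p ∈ (⌊x j⌋₊).primesLE, g p) hmn

lemma log_sub_log_le_sum_Ico {m n : ℕ} (hmn : m ≤ n) :
    log (n + 1) - log (m + 1) ≤ ∑ j ∈ Ico m n, ((j : ℝ) + 1)⁻¹ := by
  rw [← sum_Ico_sub (fun j : ℕ => log ((j : ℝ) + 1)) hmn]
  refine sum_le_sum fun j _ => ?_
  have hj : (0 : ℝ) < j + 1 := by positivity
  rw [Nat.cast_succ, ← log_div (by positivity) hj.ne']
  calc log ((j + 1 + 1) / (j + 1)) ≤ (j + 1 + 1) / (j + 1) - 1 :=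
        log_le_sub_one_of_pos (by positivity)
    _ = ((j : ℝ) + 1)⁻¹ := by field_simp; ring

lemma sub_mul_inv_le_sum_primesBetween {C : ℝ} (hL : 1 ≤ L) (ha : 0 ≤ a) (hb : 0 < b)
    (hC : b - a - C ≤ ∑ p ∈ primesBetween (L * exp a) (L * exp b), log p / p) :
    (b - a - C) * ((log L + b) * b)⁻¹ ≤
      ∑ p ∈ primesBetween (L * exp a) (L * exp b), (p * log (p / L))⁻¹ := by
  have hL0 : 0 < L := by linarith
  have hlogL : 0 ≤ log L := log_nonneg hL
  have hterm : ∀ p ∈ primesBetween (L * exp a) (L * exp b),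
      log p / p * ((log L + b) * b)⁻¹ ≤ (p * log (p / L))⁻¹ := by
    intro p hp
    obtain ⟨hp, hap, hpb⟩ := (mem_primesBetween_mul_exp hL0).1 hp
    have hp0 : (0 : ℝ) < p := by exact_mod_cast hp.pos
    have hu : 0 < log (p / L) := ha.trans_lt hap
    have hlogp : log p = log L + log (p / L) := by rw [log_div hp0.ne' hL0.ne']; ring
    rw [hlogp, ← div_eq_mul_inv, div_div, inv_eq_one_div, div_le_div_iff₀ (by positivity)
      (by positivity), one_mul, mul_left_comm]
    gcongr
  calc (b - a - C) * ((log L + b) * b)⁻¹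
      ≤ (∑ p ∈ primesBetween (L * exp a) (L * exp b), log p / p) * ((log L + b) * b)⁻¹ := by
        gcongr
    _ ≤ _ := by rw [sum_mul]; exact sum_le_sum hterm

-- Mertens' estimate loses a constant `C` on each block, which is negligible against the block
-- width `W`.
lemma mul_sum_Ico_le_sum_primesBetween {C W : ℝ}
    (hC : ∀ x y : ℝ, 1 ≤ x → x ≤ y → log y - log x - C ≤ ∑ p ∈ primesBetween x y, log p / p)
    (hL : 1 < L) (hW : 0 < W) (hCW : C ≤ W) {m n : ℕ} (hmn : m ≤ n) (hnb : n * W ≤ b) :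
    (W - C) * ((log L + b) * W)⁻¹ * ∑ j ∈ Ico m n, ((j : ℝ) + 1)⁻¹ ≤
      ∑ p ∈ primesBetween (L * exp (m * W)) (L * exp (n * W)), (p * log (p / L))⁻¹ := by
  have hL0 : 0 < L := by linarith
  have hlogL : 0 < log L := log_pos hL
  have hmono : Monotone fun j : ℕ => L * exp (j * W) := fun i j hij => by
    dsimp only
    gcongr
  rw [← sum_Ico_sum_primesBetween hmono hmn fun p => (p * log (p / L))⁻¹, mul_sum]
  refine sum_le_sum fun j hj => ?_
  have hjn : ((j + 1 : ℕ) : ℝ) * W ≤ b :=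
    (mul_le_mul_of_nonneg_right (by exact_mod_cast (mem_Ico.1 hj).2) hW.le).trans hnb
  have hwidth : ((j + 1 : ℕ) : ℝ) * W - j * W = W := by push_cast; ring
  have hmertens := hC (L * exp (j * W)) (L * exp ((j + 1 : ℕ) * W))
    (one_le_mul_of_one_le_of_one_le hL.le (one_le_exp (by positivity))) (hmono j.le_succ)
  rw [log_mul hL0.ne' (exp_ne_zero _), log_mul hL0.ne' (exp_ne_zero _), log_exp, log_exp,
    add_sub_add_left_eq_sub] at hmertens
  have hblock := sub_mul_inv_le_sum_primesBetween hL.le (by positivity) (by positivity) hmertens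
  rw [hwidth] at hblock
  refine le_trans ?_ hblock
  calc (W - C) * ((log L + b) * W)⁻¹ * ((j : ℝ) + 1)⁻¹
      = (W - C) * ((log L + b) * ((j + 1 : ℕ) * W))⁻¹ := by
        rw [mul_assoc, ← mul_inv]
        push_cast
        ring
    _ ≤ (W - C) * ((log L + (j + 1 : ℕ) * W) * ((j + 1 : ℕ) * W))⁻¹ := by
        have := sub_nonneg.2 hCW
        gcongr

lemma mem_galPrimes (hL : 0 < L) :
    p ∈ galPrimes δ L ↔
      p.Prime ∧ log (log L) ^ 2 < log (p / L) ∧ log (p / L) ≤ δ * log L :=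
  mem_primesBetween_mul_exp hL

lemma le_sq_of_mem_galPrimes (hδ : δ ≤ 1) (hL : 1 ≤ L) (hp : p ∈ galPrimes δ L) :
    (p : ℝ) ≤ L ^ 2 := by
  have hL0 : 0 < L := by linarith
  calc (p : ℝ) ≤ L * exp (δ * log L) := (mem_primesBetween.1 hp).2.2
    _ ≤ L * exp (1 * log L) := by have := log_nonneg hL; gcongr
    _ = L ^ 2 := by rw [one_mul, exp_log hL0, sq]

lemma galSum_le_three (hδ : δ ≤ 1) (hL : 1 ≤ L) (hlog : 3 ≤ log L) (hloglog : 1 ≤ log (log L)) :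
    galSum δ L ≤ 3 := by
  have hL0 : 0 < L := by linarith
  have hlog4 : log 4 ≤ 3 := (log_le_sub_one_of_pos (by norm_num)).trans (by norm_num)
  have hfloor : 1 ≤ ⌊L ^ 2⌋₊ := Nat.one_le_floor_iff _ |>.2 (one_le_pow₀ hL)
  have hsub : galPrimes δ L ⊆ (⌊L ^ 2⌋₊).primesLE := fun p hp =>
    Nat.mem_primesLE.2 ⟨Nat.le_floor (le_sq_of_mem_galPrimes hδ hL hp), (mem_primesBetween.1 hp).1⟩
  have hterm : ∀ p ∈ galPrimes δ L, (p * log (p / L))⁻¹ ≤ (log L)⁻¹ * (log p / p) := by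
    intro p hp
    obtain ⟨hprime, hup, -⟩ := (mem_galPrimes hL0).1 hp
    have hp0 : (0 : ℝ) < p := by exact_mod_cast hprime.pos
    have hu : 1 ≤ log (p / L) := (one_le_pow₀ hloglog).trans hup.le
    have hlogp : log L ≤ log p := by
      rw [log_div hp0.ne' hL0.ne'] at hu
      linarith
    calc ((p : ℝ) * log (p / L))⁻¹ ≤ (p * 1 : ℝ)⁻¹ := by gcongr
      _ = (log L)⁻¹ * (log L / p) := by field_simp
      _ ≤ _ := by gcongr
  calc galSum δ L ≤ (log L)⁻¹ * ∑ p ∈ galPrimes δ L, log p / p := by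
        rw [mul_sum]
        exact sum_le_sum hterm
    _ ≤ (log L)⁻¹ * ∑ p ∈ (⌊L ^ 2⌋₊).primesLE, log p / p := by
        gcongr
    _ ≤ (log L)⁻¹ * (log (L ^ 2) + 3) := by
        gcongr
        refine (sum_log_div_primesLE_le (by omega)).trans ?_
        gcongr
        exact Nat.floor_le (by positivity)
    _ ≤ (log L)⁻¹ * (3 * log L) := by
        gcongr
        rw [log_pow]
        push_cast
        linarith
    _ = 3 := by field_simp

lemma one_sub_mul_le_log_floor_sub_log_ceil {t W : ℝ} (hδ : 0 < δ) (hW : 0 < W)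
    (ht : t ^ 2 + 2 * W ≤ δ * exp (δ * t)) :
    (1 - δ) * t ≤ log (⌊δ * exp t / W⌋₊ + 1) - log (⌈t ^ 2 / W⌉₊ + 1) := by
  rw [← log_div (by positivity) (by positivity), le_log_iff_exp_le (by positivity)]
  have hceil : (⌈t ^ 2 / W⌉₊ : ℝ) + 1 ≤ t ^ 2 / W + 2 := by
    linarith [Nat.ceil_lt_add_one (show 0 ≤ t ^ 2 / W by positivity)]
  calc exp ((1 - δ) * t) = exp t / exp (δ * t) := by rw [← exp_sub]; ring_nf
    _ ≤ exp t / ((t ^ 2 + 2 * W) / δ) := by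
        gcongr
        rwa [div_le_iff₀' hδ]
    _ = (δ * exp t / W) / (t ^ 2 / W + 2) := by field_simp
    _ ≤ _ := by
        gcongr
        exact (Nat.lt_floor_add_one _).le

lemma eventually_sq_add_le_mul_exp (hδ : 0 < δ) (c : ℝ) :
    ∀ᶠ t : ℝ in atTop, t ^ 2 + c ≤ δ * exp (δ * t) := by
  have hsq := isLittleO_pow_exp_pos_mul_atTop 2 hδ
  have hconst := (isLittleO_pow_exp_pos_mul_atTop 0 hδ).const_mul_left c
  filter_upwards [(hsq.add hconst).bound hδ] with t ht
  rw [norm_of_nonneg (exp_pos _).le, pow_zero, mul_one] at ht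
  exact (le_norm_self _).trans ht

lemma primesBetween_subset_galPrimes (hL : 0 < L) (ha : log (log L) ^ 2 ≤ a)
    (hb : b ≤ δ * log L) : primesBetween (L * exp a) (L * exp b) ⊆ galPrimes δ L := fun _ hp =>
  have ⟨hp, hlow, hupp⟩ := (mem_primesBetween_mul_exp hL).1 hp
  (mem_galPrimes hL).2 ⟨hp, ha.trans_lt hlow, hupp.trans hb⟩

lemma mul_log_log_div_log_le_galSum {C : ℝ} (hC0 : 0 < C)
    (hC : ∀ x y : ℝ, 1 ≤ x → x ≤ y → log y - log x - C ≤ ∑ p ∈ primesBetween x y, log p / p)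
    (hδ0 : 0 < δ) (hδ1 : δ < 1) (hL : 1 < L) (ht : 0 < log (log L))
    (hexp : log (log L) ^ 2 + 2 * (C / δ) ≤ δ * exp (δ * log (log L))) :
    (1 - 3 * δ) * (log (log L) / log L) ≤ galSum δ L := by
  have hL0 : 0 < L := by linarith
  have hℓ : 0 < log L := log_pos hL
  set t := log (log L)
  set W := C / δ with hWdef
  have hW : 0 < W := div_pos hC0 hδ0
  have hCW : C = δ * W := by rw [hWdef]; field_simp
  set m := ⌈t ^ 2 / W⌉₊
  set n := ⌊δ * log L / W⌋₊
  have hlog : (1 - δ) * t ≤ log (n + 1) - log (m + 1) := by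
    have := one_sub_mul_le_log_floor_sub_log_ceil hδ0 hW hexp
    rwa [exp_log hℓ] at this
  have hmn : m ≤ n := by
    have : log (m + 1) < log (n + 1) := by nlinarith
    have := (log_lt_log_iff (by positivity) (by positivity)).1 this
    exact_mod_cast (add_lt_add_iff_right 1).1 this |>.le
  have hm : t ^ 2 ≤ m * W := (div_le_iff₀ hW).1 (Nat.le_ceil _)
  have hn : n * W ≤ δ * log L := (le_div_iff₀ hW).1 (Nat.floor_le (by positivity))
  calc (1 - 3 * δ) * (t / log L) ≤ (1 - δ) ^ 2 / (1 + δ) * (t / log L) := by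
        gcongr
        rw [le_div_iff₀ (by linarith)]
        nlinarith
    _ = (W - C) * ((log L + δ * log L) * W)⁻¹ * ((1 - δ) * t) := by
        rw [hCW]
        field_simp
    _ ≤ (W - C) * ((log L + δ * log L) * W)⁻¹ * ∑ j ∈ Ico m n, ((j : ℝ) + 1)⁻¹ := by
        have : 0 ≤ W - C := by rw [hCW]; nlinarith
        gcongr
        exact hlog.trans (log_sub_log_le_sum_Ico hmn)
    _ ≤ ∑ p ∈ primesBetween (L * exp (m * W)) (L * exp (n * W)), (p * log (p / L))⁻¹ :=
        mul_sum_Ico_le_sum_primesBetween hC hL hW (by rw [hCW]; nlinarith) hmn hn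
    _ ≤ galSum δ L := sum_le_sum_of_subset_of_nonneg
        (primesBetween_subset_galPrimes hL0 hm hn) fun p hp _ => by
        have := (sq_nonneg t).trans ((mem_galPrimes hL0).1 hp).2.1.le
        positivity

lemma eventually_le_galSum (hδ0 : 0 < δ) (hδ1 : δ < 1) :
    ∀ᶠ L in atTop, (1 - 3 * δ) * (log (log L) / log L) ≤ galSum δ L := by
  obtain ⟨C, hC0, hC⟩ := exists_log_sub_log_sub_le_sum_primesBetween
  have hloglog := tendsto_log_atTop.comp tendsto_log_atTop
  filter_upwards [hloglog.eventually (eventually_sq_add_le_mul_exp hδ0 (2 * (C / δ))),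
    hloglog.eventually_gt_atTop 0, eventually_gt_atTop 1] with L hexp ht hL
  exact mul_log_log_div_log_le_galSum hC0 hC hδ0 hδ1 hL ht hexp

end PrimeSums

/-- The normalisation of `galWeight`, chosen so that the entropy
`4 ∑ f(p)² log (1 / f(p))` of the weights stays just below `L`. -/
noncomputable def galScale (δ L : ℝ) : ℝ := (1 - 8 * δ) * L / (2 * galSum δ L)

/-- The nearly extremal weights on `galPrimes δ L`. -/
noncomputable def galWeight (δ L : ℝ) (p : ℕ) : ℝ := √(galScale δ L) / (√p * log (p / L))

/-- The conditions on `L = log N` under which `galWeight δ L` is tame. -/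
structure IsLarge (δ L : ℝ) : Prop where
  two_forty_le : 240 ≤ L
  inv_le : δ⁻¹ ≤ L
  ten_mul_log_sq_le : 10 * log L ^ 2 ≤ L
  log_four_mul_log_le : 2 * log 4 * log L ≤ δ * L
  three_le_log : 3 ≤ log L
  two_le_log_log : 2 ≤ log (log L)
  two_mul_inv_le : 2 * δ⁻¹ ≤ log (log L) ^ 2 - log (log L)
  two_mul_log_add_le : ∀ u, log (log L) ^ 2 ≤ u → 2 * log u + log 10 ≤ 2 * δ * u
  le_galSum : (1 - 3 * δ) * (log (log L) / log L) ≤ galSum δ L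

lemma eventually_isLarge {δ : ℝ} (hδ0 : 0 < δ) (hδ1 : δ < 1) : ∀ᶠ L in atTop, IsLarge δ L := by
  have hloglog := tendsto_log_atTop.comp tendsto_log_atTop
  have hsq : ∀ᶠ L : ℝ in atTop, 10 * log L ^ 2 ≤ L := by
    filter_upwards [(isLittleO_pow_log_id_atTop (n := 2)).bound (show (0 : ℝ) < 1 / 10 by norm_num),
      eventually_ge_atTop 0] with L hL hL0
    rw [norm_of_nonneg (sq_nonneg _), id, norm_of_nonneg hL0] at hL
    linarith
  have hlog : ∀ C > 0, ∀ c > 0, ∀ᶠ L : ℝ in atTop, C * log L ≤ c * L := fun C hC c hc => by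
    filter_upwards [isLittleO_log_id_atTop.bound (div_pos hc hC), eventually_ge_atTop 0]
      with L hL hL0
    rw [id, norm_of_nonneg hL0, div_mul_eq_mul_div, le_div_iff₀' hC] at hL
    exact (mul_le_mul_of_nonneg_left (le_norm_self _) hC.le).trans hL
  obtain ⟨U, hU⟩ : ∃ U, ∀ u ≥ U, 2 * log u + log 10 ≤ 2 * δ * u := by
    refine eventually_atTop.1 ?_
    filter_upwards [hlog 2 two_pos δ hδ0, eventually_ge_atTop (log 10 / δ)] with u hu hu10
    rw [div_le_iff₀' hδ0] at hu10
    linarith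
  filter_upwards [eventually_ge_atTop 240, eventually_ge_atTop δ⁻¹, hsq,
    hlog (2 * log 4) (by positivity) δ hδ0, tendsto_log_atTop.eventually_ge_atTop 3,
    hloglog.eventually_ge_atTop (2 * δ⁻¹ + 2), hloglog.eventually_ge_atTop U,
    eventually_le_galSum hδ0 hδ1] with L h240 hδL hsq hlog4 h3 htδ htU hS
  simp only [Function.comp_apply] at htδ htU
  have ht : 2 ≤ log (log L) := by linarith [inv_pos.2 hδ0]
  exact ⟨h240, hδL, hsq, hlog4, h3, ht, by nlinarith, fun u hu => hU u (by nlinarith), hS⟩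

namespace IsLarge

variable {δ L : ℝ} {p : ℕ} (h : IsLarge δ L)
include h

lemma pos : 0 < L := by linarith [h.two_forty_le]

lemma inv_log_le_galSum (hδ1 : δ ≤ 1 / 100) : (log L)⁻¹ ≤ galSum δ L := by
  refine le_trans ?_ h.le_galSum
  have hℓ : 0 < log L := by linarith [h.three_le_log]
  rw [mul_div_assoc', inv_eq_one_div]
  gcongr
  nlinarith [h.two_le_log_log]

lemma galSum_pos (hδ1 : δ ≤ 1 / 100) : 0 < galSum δ L :=
  (inv_pos.2 (by linarith [h.three_le_log])).trans_le (h.inv_log_le_galSum hδ1)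

lemma galSum_le_three (hδ1 : δ ≤ 1 / 100) : galSum δ L ≤ 3 :=
  _root_.galSum_le_three (by linarith) (by linarith [h.two_forty_le]) h.three_le_log
    (by linarith [h.two_le_log_log])

lemma div_ten_le_galScale (hδ1 : δ ≤ 1 / 100) : L / 10 ≤ galScale δ L := by
  have hL := h.two_forty_le
  rw [galScale, div_le_div_iff₀ (by norm_num) (by linarith [h.galSum_pos hδ1])]
  nlinarith [h.galSum_le_three hδ1]

lemma galScale_pos (hδ1 : δ ≤ 1 / 100) : 0 < galScale δ L :=
  lt_of_lt_of_le (by linarith [h.two_forty_le]) (h.div_ten_le_galScale hδ1)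

lemma galScale_le_mul_log (hδ0 : 0 < δ) (hδ1 : δ ≤ 1 / 100) : galScale δ L ≤ L * log L := by
  have hL := h.two_forty_le
  have hℓ : 0 < log L := by linarith [h.three_le_log]
  have hS : 1 ≤ galSum δ L * log L := (inv_le_iff_one_le_mul₀ hℓ).1 (h.inv_log_le_galSum hδ1)
  rw [galScale, div_le_iff₀ (by linarith [h.galSum_pos hδ1])]
  nlinarith

lemma log_sub_le_log_galScale (hδ1 : δ ≤ 1 / 100) : log L - log 10 ≤ log (galScale δ L) := by
  have hL := h.two_forty_le
  rw [← log_div (by linarith) (by norm_num)]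
  exact log_le_log (by linarith) (h.div_ten_le_galScale hδ1)

lemma log_galScale_le (hδ0 : 0 < δ) (hδ1 : δ ≤ 1 / 100) :
    log (galScale δ L) ≤ log L + log (log L) := by
  rw [← log_mul (by linarith [h.two_forty_le]) (by linarith [h.three_le_log])]
  exact log_le_log (h.galScale_pos hδ1) (h.galScale_le_mul_log hδ0 hδ1)

lemma log_le_sqrt_galScale (hδ1 : δ ≤ 1 / 100) : log L ≤ √(galScale δ L) :=
  le_sqrt_of_sq_le <| le_trans (by linarith [h.ten_mul_log_sq_le]) (h.div_ten_le_galScale hδ1)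

lemma one_le_log_div (hp : p ∈ galPrimes δ L) : 1 ≤ log (p / L) := by
  have hu := ((mem_galPrimes h.pos).1 hp).2.1
  nlinarith [h.two_le_log_log]

lemma galWeight_pos (hδ1 : δ ≤ 1 / 100) (hp : p ∈ galPrimes δ L) : 0 < galWeight δ L p := by
  have hp0 : (0 : ℝ) < p := by exact_mod_cast (mem_primesBetween.1 hp).1.pos
  have hu := h.one_le_log_div hp
  have hβ := h.galScale_pos hδ1
  rw [galWeight]
  positivity

lemma neg_log_galWeight (hδ1 : δ ≤ 1 / 100) (hp : p ∈ galPrimes δ L) :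
    -log (galWeight δ L p) =
      (log L + log (p / L) + 2 * log (log (p / L)) - log (galScale δ L)) / 2 := by
  have hL := h.two_forty_le
  have hp0 : (0 : ℝ) < p := by exact_mod_cast (mem_primesBetween.1 hp).1.pos
  have hu := h.one_le_log_div hp
  have hβ := h.galScale_pos hδ1
  rw [galWeight, log_div (by positivity) (by positivity), log_mul (by positivity) (by positivity),
    log_sqrt hβ.le, log_sqrt hp0.le, log_div hp0.ne' (by positivity)]
  ring

lemma neg_log_galWeight_le (hδ1 : δ ≤ 1 / 100) (hp : p ∈ galPrimes δ L) :
    -log (galWeight δ L p) ≤ (1 + 2 * δ) / 2 * log (p / L) := by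
  have hu := ((mem_galPrimes h.pos).1 hp).2.1
  rw [h.neg_log_galWeight hδ1 hp]
  linarith [h.two_mul_log_add_le _ hu.le, h.log_sub_le_log_galScale hδ1]

lemma inv_le_neg_log_galWeight (hδ0 : 0 < δ) (hδ1 : δ ≤ 1 / 100) (hp : p ∈ galPrimes δ L) :
    δ⁻¹ ≤ -log (galWeight δ L p) := by
  have hu := ((mem_galPrimes h.pos).1 hp).2.1
  rw [h.neg_log_galWeight hδ1 hp]
  linarith [h.log_galScale_le hδ0 hδ1, log_nonneg (h.one_le_log_div hp), h.two_mul_inv_le]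

lemma isTame (hδ0 : 0 < δ) (hδ1 : δ ≤ 1 / 100) :
    IsTame (galPrimes δ L) (galWeight δ L) (log L)⁻¹ δ where
  prime p hp := (mem_primesBetween.1 hp).1
  pos p hp := h.galWeight_pos hδ1 hp
  inv_le_neg_log p hp := h.inv_le_neg_log_galWeight hδ0 hδ1 hp
  mul_neg_log_le p hp := by
    have hℓ : 0 < log L := by linarith [h.three_le_log]
    have hu := ((mem_galPrimes h.pos).1 hp).2.2
    rw [inv_mul_le_iff₀ hℓ, mul_comm]
    nlinarith [h.neg_log_galWeight_le hδ1 hp, h.one_le_log_div hp]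
  div_sqrt_le p hp := by
    have hp0 : (0 : ℝ) < p := by exact_mod_cast (mem_primesBetween.1 hp).1.pos
    have hu := h.one_le_log_div hp
    have hf := h.galWeight_pos hδ1 hp
    have huβ : log (p / L) ≤ δ * √(galScale δ L) :=
      ((mem_galPrimes h.pos).1 hp).2.2.trans <|
        mul_le_mul_of_nonneg_left (h.log_le_sqrt_galScale hδ1) hδ0.le
    calc galWeight δ L p / √p = galWeight δ L p * (log (p / L) / (√p * log (p / L))) := by
          field_simp
      _ ≤ galWeight δ L p * (δ * √(galScale δ L) / (√p * log (p / L))) := by gcongr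
      _ = δ * galWeight δ L p ^ 2 := by rw [galWeight]; ring
  inv_le p hp := by
    have hL := h.two_forty_le
    have hLp : L ≤ p := by
      refine le_trans ?_ (mem_primesBetween.1 hp).2.1.le
      exact le_mul_of_one_le_right (by linarith) (one_le_exp (sq_nonneg _))
    exact inv_le_of_inv_le₀ hδ0 (h.inv_le.trans hLp)

lemma four_mul_sum_galWeight_sq_mul_neg_log_le (hδ0 : 0 < δ) (hδ1 : δ ≤ 1 / 100) :
    4 * ∑ p ∈ galPrimes δ L, galWeight δ L p ^ 2 * -log (galWeight δ L p) ≤ (1 - 6 * δ) * L := by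
  have hL := h.two_forty_le
  have hβ := h.galScale_pos hδ1
  have hterm : ∀ p ∈ galPrimes δ L, galWeight δ L p ^ 2 * -log (galWeight δ L p) ≤
      (1 + 2 * δ) / 2 * galScale δ L * (p * log (p / L))⁻¹ := fun p hp => by
    have hu := h.one_le_log_div hp
    calc galWeight δ L p ^ 2 * -log (galWeight δ L p)
        ≤ galWeight δ L p ^ 2 * ((1 + 2 * δ) / 2 * log (p / L)) := by
          gcongr
          exact h.neg_log_galWeight_le hδ1 hp
      _ = (1 + 2 * δ) / 2 * galScale δ L * (p * log (p / L))⁻¹ := by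
          rw [galWeight, div_pow, mul_pow, sq_sqrt hβ.le, sq_sqrt p.cast_nonneg]
          field_simp
  have hS := h.galSum_pos hδ1
  calc 4 * ∑ p ∈ galPrimes δ L, galWeight δ L p ^ 2 * -log (galWeight δ L p)
      ≤ 4 * ((1 + 2 * δ) / 2 * galScale δ L * galSum δ L) := by
        rw [galSum, mul_sum _ _ ((1 + 2 * δ) / 2 * galScale δ L)]
        exact mul_le_mul_of_nonneg_left (sum_le_sum hterm) zero_le_four
    _ = (1 + 2 * δ) * (1 - 8 * δ) * L := by
        rw [galScale]
        field_simp
        ring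
    _ ≤ (1 - 6 * δ) * L := by
        gcongr
        nlinarith

end IsLarge

lemma sum_galWeight_div_sqrt (δ L : ℝ) :
    ∑ p ∈ galPrimes δ L, galWeight δ L p / √p = √(galScale δ L) * galSum δ L := by
  rw [galSum, mul_sum]
  refine sum_congr rfl fun p _ => ?_
  rw [galWeight, div_div, mul_right_comm, mul_self_sqrt p.cast_nonneg, div_eq_mul_inv]

lemma IsLarge.sqrt_le_sum_galWeight_div_sqrt {δ L : ℝ} (h : IsLarge δ L) (hδ0 : 0 < δ)
    (hδ1 : δ ≤ 1 / 100) :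
    2 * √2 * (1 - 9 * δ) * √(L * log (log L) / log L) ≤
      (1 - δ) * (4 * ∑ p ∈ galPrimes δ L, galWeight δ L p / √p) := by
  have hL := h.two_forty_le
  have hS := h.galSum_pos hδ1
  have h8 : 0 ≤ 1 - 8 * δ := by linarith
  have hℓ := h.three_le_log
  set Y := √(L * log (log L) / log L)
  have hsq : √2 * (1 - 8 * δ) * Y ≤ 2 * (√(galScale δ L) * galSum δ L) := by
    have ht : 0 ≤ log (log L) := by linarith [h.two_le_log_log]
    have hβS : galScale δ L * galSum δ L ^ 2 = (1 - 8 * δ) * L / 2 * galSum δ L := by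
      rw [galScale]
      field_simp
    refine (sq_le_sq₀ (by positivity) (by positivity)).1 ?_
    calc (√2 * (1 - 8 * δ) * Y) ^ 2
        = 2 * ((1 - 8 * δ) * L) * ((1 - 8 * δ) * (log (log L) / log L)) := by
          rw [mul_pow, mul_pow, sq_sqrt zero_le_two, sq_sqrt (by positivity)]
          ring
      _ ≤ 2 * ((1 - 8 * δ) * L) * galSum δ L := by
          gcongr
          refine le_trans ?_ h.le_galSum
          gcongr
          linarith
      _ = (2 * (√(galScale δ L) * galSum δ L)) ^ 2 := by
          rw [mul_pow, mul_pow, sq_sqrt (h.galScale_pos hδ1).le, hβS]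
          ring
  calc 2 * √2 * (1 - 9 * δ) * Y ≤ 2 * (1 - δ) * (√2 * (1 - 8 * δ) * Y) := by
        have : 0 ≤ √2 * Y := by positivity
        nlinarith [mul_nonneg (sq_nonneg δ) this]
    _ ≤ 2 * (1 - δ) * (2 * (√(galScale δ L) * galSum δ L)) := by
        have : 0 ≤ 1 - δ := by linarith
        gcongr
    _ = (1 - δ) * (4 * ∑ p ∈ galPrimes δ L, galWeight δ L p / √p) := by
        rw [sum_galWeight_div_sqrt]
        ring

lemma natClog_two_le {N : ℕ} (hN : 1 < N) : (Nat.clog 2 N : ℝ) ≤ 2 * log N + 1 := by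
  have hpow : (2 : ℝ) ^ (Nat.clog 2 N - 1) < N := by
    exact_mod_cast Nat.pow_pred_clog_lt_self one_lt_two hN
  have hlog := log_lt_log (by positivity) hpow
  rw [log_pow, Nat.cast_sub (Nat.clog_pos one_lt_two hN)] at hlog
  push_cast at hlog
  have hclog : (1 : ℝ) ≤ Nat.clog 2 N := by exact_mod_cast Nat.clog_pos one_lt_two hN
  nlinarith [log_two_gt_d9]

lemma IsLarge.exists_isDyadicOfCard_exp_le {δ : ℝ} {N : ℕ} (h : IsLarge δ (log N)) (hδ0 : 0 < δ)
    (hδ1 : δ ≤ 1 / 100) :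
    ∃ M, IsDyadicOfCard M N ∧
      N * exp (2 * √2 * (1 - 9 * δ) * √(log N * log (log (log N)) / log (log N))) ≤
        log N ^ 4 * gcdForm M 1 1 := by
  have hL := h.two_forty_le
  have hN : 1 < N := by
    by_contra! hN
    have : log N ≤ 0 := log_nonpos N.cast_nonneg (by exact_mod_cast hN)
    linarith
  have hℓ : 0 < log (log N) := by linarith [h.three_le_log]
  obtain ⟨M, hM, hexp⟩ := (h.isTame hδ0 hδ1).exists_isDyadicOfCard_exp_le (N := N)
    (fun p hp => Nat.le_floor (le_sq_of_mem_galPrimes (by linarith) (by linarith) hp))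
    (inv_nonneg.2 hℓ.le) hδ0 hδ1 (by omega)
    (h.four_mul_sum_galWeight_sq_mul_neg_log_le hδ0 hδ1)
    (by
      rw [div_mul_eq_mul_div, inv_mul_eq_div, div_div, le_div_iff₀ (by positivity)]
      linarith [h.log_four_mul_log_le])
  have hM0 := gcdForm_one_nonneg M
  refine ⟨M, hM, ?_⟩
  calc N * exp (2 * √2 * (1 - 9 * δ) * √(log N * log (log (log N)) / log (log N)))
      ≤ N * exp ((1 - δ) * (4 * ∑ p ∈ galPrimes δ (log N), galWeight δ (log N) p / √p)) := by
        have := h.sqrt_le_sum_galWeight_div_sqrt hδ0 hδ1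
        gcongr
    _ ≤ 16 * ((Nat.clog 2 N + 1) * (4 * ⌊log N ^ 2⌋₊ + 1)) * gcdForm M 1 1 := hexp
    _ ≤ 16 * ((2 * log N + 1 + 1) * (4 * log N ^ 2 + 1)) * gcdForm M 1 1 := by
        gcongr
        · exact natClog_two_le hN
        · exact Nat.floor_le (sq_nonneg _)
    _ ≤ log N ^ 4 * gcdForm M 1 1 := by
        gcongr
        nlinarith [pow_le_pow_left₀ (by norm_num) hL 2, pow_le_pow_left₀ (by norm_num) hL 3]

lemma eventually_pow_four_le_exp {c : ℝ} (hc : 0 < c) :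
    ∀ᶠ L in atTop, L ^ 4 ≤ exp (c * √(L * log (log L) / log L)) := by
  filter_upwards [(isLittleO_pow_log_id_atTop (n := 3)).bound (show 0 < (c / 4) ^ 2 by positivity),
    (tendsto_log_atTop.comp tendsto_log_atTop).eventually_ge_atTop 1,
    eventually_gt_atTop 1] with L hlog ht hL
  simp only [Function.comp_apply] at ht
  have hL0 : 0 < L := by linarith
  have hℓ : 0 < log L := log_pos hL
  rw [norm_of_nonneg (by positivity), id, norm_of_nonneg hL0.le] at hlog
  have hsqrt : 4 / c * log L ≤ √(L * log (log L) / log L) := by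
    refine le_sqrt_of_sq_le ?_
    rw [le_div_iff₀ hℓ]
    calc (4 / c * log L) ^ 2 * log L = (4 / c) ^ 2 * log L ^ 3 := by ring
      _ ≤ (4 / c) ^ 2 * ((c / 4) ^ 2 * L) := by gcongr
      _ = L * 1 := by field_simp
      _ ≤ L * log (log L) := by gcongr
  calc L ^ 4 = exp (c * (4 / c * log L)) := by
        rw [← mul_assoc, mul_div_cancel₀ _ hc.ne', ← exp_log (pow_pos hL0 4), log_pow]
        norm_num
    _ ≤ _ := by gcongr

theorem eventually_exists_exp_mul_le_gcdForm {ε : ℝ} (hε : 0 < ε) :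
    ∀ᶠ N : ℕ in atTop, ∃ M, IsDyadicOfCard M N ∧
      N * exp ((2 * √2 - ε) * √(log N * log (log (log N)) / log (log N))) ≤ gcdForm M 1 1 := by
  set δ := min (ε / 60) (1 / 100)
  have hδ0 : 0 < δ := by positivity
  have hδ1 : δ ≤ 1 / 100 := min_le_right _ _
  have hδε : 2 * √2 - ε + ε / 2 ≤ 2 * √2 * (1 - 9 * δ) := by
    have hsqrt2 : √2 ≤ 3 / 2 := sqrt_le_left (by norm_num) |>.2 (by norm_num)
    nlinarith [min_le_left (ε / 60) (1 / 100)]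
  have hlog : Tendsto (fun N : ℕ => log N) atTop atTop :=
    tendsto_log_atTop.comp tendsto_natCast_atTop_atTop
  filter_upwards [hlog.eventually (eventually_isLarge hδ0 (by linarith)),
    hlog.eventually (eventually_pow_four_le_exp (half_pos hε))] with N hN hpow
  obtain ⟨M, hM, hexp⟩ := hN.exists_isDyadicOfCard_exp_le hδ0 hδ1
  refine ⟨M, hM, le_of_mul_le_mul_left (hexp.trans' ?_) (pow_pos hN.pos 4)⟩
  set Y := √(log N * log (log (log N)) / log (log N))
  calc log N ^ 4 * (N * exp ((2 * √2 - ε) * Y))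
      ≤ exp (ε / 2 * Y) * (N * exp ((2 * √2 - ε) * Y)) := by gcongr
    _ = N * exp ((2 * √2 - ε + ε / 2) * Y) := by rw [add_mul, exp_add]; ring
    _ ≤ N * exp (2 * √2 * (1 - 9 * δ) * Y) := by gcongr

theorem gcd_sum_lower_bound :
    ∀ ε > (0:ℝ), ∃ N₀ : ℕ, ∀ N : ℕ, N₀ ≤ N →
      ∃ M : Finset ℕ, (∀ m ∈ M, 0 < m) ∧ M.card = N ∧
        (∀ m ∈ M, ∀ n ∈ M, m ≤ 2 * n) ∧
        Real.exp ((2 * Real.sqrt 2 - ε) *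
            Real.sqrt (Real.log N * Real.log (Real.log (Real.log N))
              / Real.log (Real.log N)))
          ≤ (1 / (N : ℝ)) * ∑ m ∈ M, ∑ n ∈ M,
              Real.sqrt ((Nat.gcd m n : ℝ) / (Nat.lcm m n : ℝ)) := by
  intro ε hε
  refine eventually_atTop.1 ?_
  filter_upwards [eventually_exists_exp_mul_le_gcdForm hε, eventually_gt_atTop 0]
    with N ⟨M, hM, hexp⟩ hN
  refine ⟨M, hM.pos, hM.card_eq, hM.le_two_mul, ?_⟩
  rw [one_div_mul_eq_div, le_div_iff₀' (by exact_mod_cast hN)]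
  simpa only [gcdForm, gcdKernel, Pi.one_apply, one_mul] using hexp
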